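/- arXiv:1701.01971 — 5 statements merged into one kernel-verified Lean document; each statement's English description precedes it below -/
import Mathlib

section
/- Let Q be a finite set, B ⊆ Q, and D a leveled DAG over Q. If D contains at least one infinitary (i.e., non-finitary) vertex that is not B-recurring, then the ultimate width of the leveled DAG obtained from D by one peeling step is strictly smaller than the ultimate width of D. -/
/-- A leveled DAG over `Q`: vertex set a subset of `ℕ × Q`, every edge goes from a
vertex on some level `i` to a vertex on level `i + 1`. -/
structure LDAG (Q : Type*) where
  V : Set (ℕ × Q)
  E : ℕ × Q → ℕ × Q → Prop
  edge_mem : ∀ ⦃v w⦄, E v w → v ∈ V ∧ w ∈ V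
  edge_level : ∀ ⦃v w⦄, E v w → w.1 = v.1 + 1

namespace LDAG

variable {Q : Type*}

/-- `w` is a descendant of `v` (including `v` itself). -/
def Desc (D : LDAG Q) : ℕ × Q → ℕ × Q → Prop := Relation.ReflTransGen D.E

/-- A vertex is finitary if it has only finitely many descendants. -/
def Finitary (D : LDAG Q) (v : ℕ × Q) : Prop := {w | D.Desc v w}.Finite

/-- A vertex is `B`-free if no descendant of it (including itself) is `B`-tagged. -/
def BFree (D : LDAG Q) (B : Set Q) (v : ℕ × Q) : Prop :=
  ∀ w, D.Desc v w → w.2 ∉ B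

/-- A vertex is `B`-recurring if some infinite path starting in it contains infinitely
many `B`-tagged vertices. -/
def BRecurring (D : LDAG Q) (B : Set Q) (v : ℕ × Q) : Prop :=
  ∃ p : ℕ → ℕ × Q, p 0 = v ∧ (∀ n, D.E (p n) (p (n + 1))) ∧
    ∀ m, ∃ n, m ≤ n ∧ (p n).2 ∈ B

/-- The subgraph of `D` induced by the set `S` of vertices. -/
def induced (D : LDAG Q) (S : Set (ℕ × Q)) : LDAG Q where
  V := D.V ∩ S
  E v w := D.E v w ∧ v ∈ S ∧ w ∈ S
  edge_mem := fun _ _ h => ⟨⟨(D.edge_mem h.1).1, h.2.1⟩, ⟨(D.edge_mem h.1).2, h.2.2⟩⟩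
  edge_level := fun _ _ h => D.edge_level h.1

/-- One peeling step: first remove all finitary vertices, then remove all vertices that
are `B`-free in the resulting induced subgraph. -/
def peel (B : Set Q) (D : LDAG Q) : LDAG Q :=
  let D₁ := D.induced {v | ¬ D.Finitary v}
  D₁.induced {v | ¬ D₁.BFree B v}

end LDAG

/-- The run DAG of the Büchi automaton with transition relation `Δ` on the ω-word `u`:
vertex set `ℕ × Q`, edges from `⟨i, q⟩` to `⟨i+1, q'⟩` whenever `(q, u i, q') ∈ Δ`. -/
def runDAG {Q A : Type*} (Δ : Set (Q × A × Q)) (u : ℕ → A) : LDAG Q where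
  V := Set.univ
  E v w := w.1 = v.1 + 1 ∧ (v.2, u v.1, w.2) ∈ Δ
  edge_mem := fun _ _ _ => ⟨trivial, trivial⟩
  edge_level := fun _ _ h => h.1

/-- The ultimate width of a leveled DAG: the limit inferior, as `i → ∞`, of the number
of vertices on level `i` that are infinitary (non-finitary) and not `B`-recurring. -/
noncomputable def LDAG.ultWidth {Q : Type*} (B : Set Q) (D : LDAG Q) : ℕ :=
  Filter.atTop.liminf fun i : ℕ =>
    Nat.card {v : ℕ × Q // v ∈ D.V ∧ v.1 = i ∧ ¬ D.Finitary v ∧ ¬ D.BRecurring B v}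


theorem aux_path {Q : Type*} (D : LDAG Q) (p : ℕ → ℕ × Q) (hp : ∀ n, D.E (p n) (p (n + 1)))
    (n k : ℕ) : D.Desc (p n) (p (n + k)) := by
  induction k with
  | zero => exact Relation.ReflTransGen.refl
  | succ k ih => exact Relation.ReflTransGen.tail ih (hp (n + k))

theorem aux_level {Q : Type*} (D : LDAG Q) (p : ℕ → ℕ × Q) (hp : ∀ n, D.E (p n) (p (n + 1)))
    (n : ℕ) : (p n).1 = (p 0).1 + n := by
  induction n with
  | zero => rfl
  | succ k ih => rw [D.edge_level (hp k), ih]; omega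

theorem aux_inf {Q : Type*} (D : LDAG Q) (p : ℕ → ℕ × Q) (hp : ∀ n, D.E (p n) (p (n + 1)))
    (n : ℕ) : ¬ D.Finitary (p n) := by
  intro hf
  have hinj : Function.Injective (fun k => p (n + k)) := by
    intro a b hab
    have h1 := aux_level D p hp (n + a)
    have h2 := aux_level D p hp (n + b)
    simp only at hab
    rw [hab] at h1
    omega
  exact Set.infinite_of_injective_forall_mem hinj (fun k => aux_path D p hp n k) hf

theorem aux_koenig {Q : Type*} [Fintype Q] (D : LDAG Q) (x : ℕ × Q) (hx : ¬ D.Finitary x) :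
    ∃ y, D.E x y ∧ ¬ D.Finitary y := by
  by_contra! hc
  apply hx
  have hfin : {y | D.E x y}.Finite := by
    apply ((Set.finite_singleton (x.1 + 1)).prod (Set.finite_univ (α := Q))).subset
    intro y hy
    exact ⟨D.edge_level hy, trivial⟩
  have h2 : (⋃ y ∈ {y | D.E x y}, {w | D.Desc y w}).Finite := hfin.biUnion (fun y hy => hc y hy)
  apply ((Set.finite_singleton x).union h2).subset
  intro w hw
  rcases Relation.ReflTransGen.cases_head hw with h | ⟨y, h1, h3⟩
  · left; exact h.symm
  · right
    simp only [Set.mem_iUnion]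
    exact ⟨y, h1, h3⟩

def auxR {α : Type*} (E : α → α → Prop) (P : α → Prop) : ℕ → α → Prop
  | 0, x => P x
  | n + 1, x => ∃ y, E x y ∧ auxR E P n y

theorem auxR_of {α : Type*} (E : α → α → Prop) (P : α → Prop) (x w : α)
    (h : Relation.ReflTransGen E x w) (hw : P w) : ∃ n, auxR E P n x := by
  induction h using Relation.ReflTransGen.head_induction_on with
  | refl => exact ⟨0, hw⟩
  | head h1 _ ih => obtain ⟨n, hn⟩ := ih; exact ⟨n + 1, _, h1, hn⟩

theorem aux_rec {α : Type*} (E : α → α → Prop) (P S : α → Prop)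
    (hcl : ∀ x y, S x → E x y → S y) (hs : ∀ x, S x → ∃ y, E x y)
    (hR : ∀ x, S x → ∃ n, auxR E P n x) (v : α) (hv : S v) :
    ∃ p : ℕ → α, p 0 = v ∧ (∀ n, E (p n) (p (n + 1))) ∧ ∀ m, ∃ n, m ≤ n ∧ P (p n) := by
  let T := {s : α × ℕ // S s.1 ∧ auxR E P s.2 s.1}
  have hstep : ∀ s : T, ∃ t : T, E s.1.1 t.1.1 ∧ (s.1.2 ≠ 0 → t.1.2 + 1 = s.1.2) := by
    rintro ⟨⟨x, n⟩, hx, hn⟩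
    cases n with
    | zero =>
      obtain ⟨y, hy⟩ := hs x hx
      obtain ⟨m, hm⟩ := hR y (hcl x y hx hy)
      exact ⟨⟨(y, m), hcl x y hx hy, hm⟩, hy, fun h => absurd rfl h⟩
    | succ n =>
      obtain ⟨y, hy, hm⟩ := hn
      exact ⟨⟨(y, n), hcl x y hx hy, hm⟩, hy, fun h => rfl⟩
  choose next hE hdec using hstep
  obtain ⟨n0, hn0⟩ := hR v hv
  let q : ℕ → T := fun n => next^[n] ⟨(v, n0), hv, hn0⟩
  have hq : ∀ n, q (n + 1) = next (q n) := fun n => Function.iterate_succ_apply' _ _ _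
  refine ⟨fun n => (q n).1.1, rfl, fun n => ?_, ?_⟩
  · simp only [hq]; exact hE _
  · have key : ∀ k n, (q n).1.2 = k → ∃ m, n ≤ m ∧ P (q m).1.1 := by
      intro k
      induction k with
      | zero =>
        intro n hn
        have := (q n).2.2
        rw [hn] at this
        exact ⟨n, le_rfl, this⟩
      | succ k ih =>
        intro n hn
        have h1 := hdec (q n) (by omega)
        rw [← hq] at h1
        obtain ⟨m, hm, hP⟩ := ih (n + 1) (by omega)
        exact ⟨m, by omega, hP⟩
    intro m
    exact key _ m rfl

theorem aux_desc_mem {Q : Type*} (D : LDAG Q) (S : Set (ℕ × Q)) {x y : ℕ × Q}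
    (hx : x ∈ D.V ∩ S) (h : (D.induced S).Desc x y) : y ∈ D.V ∩ S := by
  rcases Relation.ReflTransGen.cases_tail h with h | ⟨z, _, h⟩
  · rw [h]; exact hx
  · exact ((D.induced S).edge_mem h).2

theorem aux_sub {Q : Type*} (B : Set Q) (D : LDAG Q) (x : ℕ × Q)
    (h : x ∈ (D.peel B).V ∧ ¬ (D.peel B).Finitary x ∧ ¬ (D.peel B).BRecurring B x) :
    x ∈ D.V ∧ ¬ D.Finitary x ∧ ¬ D.BRecurring B x := by
  obtain ⟨h1, h2, h3⟩ := h
  refine ⟨h1.1.1, h1.1.2, ?_⟩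
  rintro ⟨p, hp0, hp, hB⟩
  apply h3
  have hp1 : ∀ n, (D.induced {v | ¬ D.Finitary v}).E (p n) (p (n + 1)) :=
    fun n => ⟨hp n, aux_inf D p hp n, aux_inf D p hp (n + 1)⟩
  have hnb : ∀ n, ¬ (D.induced {v | ¬ D.Finitary v}).BFree B (p n) := by
    intro n hf
    obtain ⟨m, hm, hmB⟩ := hB n
    obtain ⟨k, rfl⟩ := Nat.exists_eq_add_of_le hm
    exact hf _ (aux_path _ p hp1 n k) hmB
  exact ⟨p, hp0, fun n => ⟨hp1 n, hnb n, hnb (n + 1)⟩, hB⟩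

theorem aux_strict {Q : Type*} [Fintype Q] (B : Set Q) (D : LDAG Q)
    (h : ∃ v ∈ D.V, ¬ D.Finitary v ∧ ¬ D.BRecurring B v) :
    ∃ N, ∀ i, N ≤ i → ∃ x : ℕ × Q, x.1 = i ∧ x ∈ D.V ∧ ¬ D.Finitary x ∧ ¬ D.BRecurring B x ∧
      x ∉ (D.peel B).V := by
  obtain ⟨v, hv, hvi, hvr⟩ := h
  set D₁ := D.induced {v | ¬ D.Finitary v} with hD
  have hsucc : ∀ x, ¬ D.Finitary x → ∃ y, D₁.E x y := by
    intro x hx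
    obtain ⟨y, hy, hyi⟩ := aux_koenig D x hx
    exact ⟨y, hy, hx, hyi⟩
  have hw : ∃ w, D₁.Desc v w ∧ D₁.BFree B w := by
    by_contra! hc
    apply hvr
    obtain ⟨p, hp0, hp, hB⟩ := aux_rec D₁.E (fun x => x.2 ∈ B) (fun x => D₁.Desc v x)
      (fun x y hx hxy => Relation.ReflTransGen.tail hx hxy)
      (fun x hx => hsucc x (aux_desc_mem D _ ⟨hv, hvi⟩ hx).2)
      (fun x hx => by
        have := hc x hx
        simp only [LDAG.BFree, not_forall, not_not] at this
        obtain ⟨w, h1, h2⟩ := this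
        exact auxR_of _ _ x w h1 h2) v Relation.ReflTransGen.refl
    exact ⟨p, hp0, fun n => (hp n).1, hB⟩
  obtain ⟨w, hvw, hwB⟩ := hw
  have hwm := aux_desc_mem D _ ⟨hv, hvi⟩ hvw
  refine ⟨w.1, fun i hi => ?_⟩
  have hex : ∃ x : ℕ × Q, x.1 = i ∧ D₁.Desc w x := by
    induction i, hi using Nat.le_induction with
    | base => exact ⟨w, rfl, Relation.ReflTransGen.refl⟩
    | succ i _ ih =>
      obtain ⟨x, hx, hd⟩ := ih
      obtain ⟨y, hy⟩ := hsucc x (aux_desc_mem D _ hwm hd).2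
      exact ⟨y, by rw [D₁.edge_level hy, hx], Relation.ReflTransGen.tail hd hy⟩
  obtain ⟨x, hx, hd⟩ := hex
  have hxm := aux_desc_mem D _ hwm hd
  have hxB : D₁.BFree B x := fun z hz => hwB z (Relation.ReflTransGen.trans hd hz)
  refine ⟨x, hx, hxm.1, hxm.2, ?_, fun h => h.2 hxB⟩
  rintro ⟨p, hp0, hp, hB⟩
  have hp1 : ∀ n, D₁.E (p n) (p (n + 1)) :=
    fun n => ⟨hp n, aux_inf D p hp n, aux_inf D p hp (n + 1)⟩
  obtain ⟨m, _, hmB⟩ := hB 0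
  have := aux_path D₁ p hp1 0 m
  rw [hp0, Nat.zero_add] at this
  exact hxB _ this hmB

theorem aux_liminf (f g : ℕ → ℕ) (C : ℕ) (hg : ∀ i, g i ≤ C) (N : ℕ)
    (hfg : ∀ i, N ≤ i → f i < g i) :
    Filter.atTop.liminf f < Filter.atTop.liminf g := by
  rw [Filter.liminf_eq, Filter.liminf_eq]
  have hb : ∀ h : ℕ → ℕ, (∀ i, N ≤ i → h i ≤ C) →
      BddAbove {a | ∀ᶠ n in Filter.atTop, a ≤ h n} := by
    intro h hh
    refine ⟨C, fun a ha => ?_⟩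
    obtain ⟨n, h1, h2⟩ := (ha.and (Filter.eventually_ge_atTop N)).exists
    exact h1.trans (hh n h2)
  have hm := Nat.sSup_mem (s := {a | ∀ᶠ n in Filter.atTop, a ≤ f n})
    ⟨0, Filter.Eventually.of_forall fun _ => Nat.zero_le _⟩
    (hb f fun i hi => (hfg i hi).le.trans (hg i))
  apply Nat.lt_of_succ_le
  apply le_csSup (hb g fun i _ => hg i)
  filter_upwards [hm, Filter.eventually_ge_atTop N] with n h1 h2
  exact Nat.succ_le_of_lt (lt_of_le_of_lt h1 (hfg n h2))

/-- if a leveled DAG `D` over a finite set `Q` contains an infinitary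
vertex that is not `B`-recurring, then one peeling step strictly decreases the ultimate
width. -/
theorem peel_ultWidth_lt {Q : Type*} [Fintype Q] (B : Set Q) (D : LDAG Q)
    (h : ∃ v ∈ D.V, ¬ D.Finitary v ∧ ¬ D.BRecurring B v) :
    (D.peel B).ultWidth B < D.ultWidth B := by
  obtain ⟨N, hN⟩ := aux_strict B D h
  have hfin : ∀ i, {v : ℕ × Q | v.1 = i}.Finite := by
    intro i
    apply ((Set.finite_singleton i).prod (Set.finite_univ (α := Q))).subset
    intro y hy
    exact ⟨hy, trivial⟩
  have hI : ∀ (D : LDAG Q) i,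
      {v : ℕ × Q | v ∈ D.V ∧ v.1 = i ∧ ¬ D.Finitary v ∧ ¬ D.BRecurring B v}.Finite :=
    fun D i => (hfin i).subset fun v hv => hv.2.1
  unfold LDAG.ultWidth
  apply aux_liminf _ _ (Fintype.card Q) _ N
  · intro i hi
    change Set.ncard {v : ℕ × Q | v ∈ (D.peel B).V ∧ v.1 = i ∧ ¬ (D.peel B).Finitary v ∧
        ¬ (D.peel B).BRecurring B v} <
      Set.ncard {v : ℕ × Q | v ∈ D.V ∧ v.1 = i ∧ ¬ D.Finitary v ∧ ¬ D.BRecurring B v}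
    apply Set.ncard_lt_ncard _ (hI D i)
    obtain ⟨x, hx, h1, h2, h3, h4⟩ := hN i hi
    refine Set.ssubset_iff_exists.2 ⟨fun y hy => ?_, x, ⟨h1, hx, h2, h3⟩, fun h => h4 h.1⟩
    obtain ⟨a, b, c⟩ := aux_sub B D y ⟨hy.1, hy.2.2⟩
    exact ⟨a, hy.2.1, b, c⟩
  · intro i
    rw [← Nat.card_eq_fintype_card]
    apply Nat.card_le_card_of_injective (fun v => v.1.2)
    rintro ⟨⟨a, q⟩, ha⟩ ⟨⟨b, r⟩, hb⟩ hqr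
    have e1 : a = i := ha.2.1
    have e2 : b = i := hb.2.1
    have e3 : q = r := hqr
    subst e1 e3
    subst e2
    rfl
end

section
/- Let (Q, Δ, B) be a nondeterministic Büchi automaton with |Q| = n, u an ω-word, and c the canonical rank function of the run DAG of the automaton on u. Then every vertex v of the run DAG satisfies c(v) < 2n or c(v) = ∞, and c(v) = ∞ holds if and only if v is B-recurring. -/
namespace LDAG

/-- The set of vertices assigned a canonical rank `< k` (successive peeling):
vertices of even rank `2i` are those finitary in the subgraph induced by the vertices of
rank `≥ 2i`; vertices of odd rank `2i+1` are those `B`-free in the subgraph induced by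
the vertices of rank `≥ 2i+1`. -/
def rankBelow {Q : Type*} (B : Set Q) (D : LDAG Q) : ℕ → Set (ℕ × Q)
  | 0 => ∅
  | k + 1 =>
    rankBelow B D k ∪
      (if k % 2 = 0 then
        {v | v ∈ (D.induced (rankBelow B D k)ᶜ).V ∧
          (D.induced (rankBelow B D k)ᶜ).Finitary v}
      else
        {v | v ∈ (D.induced (rankBelow B D k)ᶜ).V ∧
          (D.induced (rankBelow B D k)ᶜ).BFree B v})

/-- The canonical rank of a vertex: the least `n` such that the vertex is assigned rank
`n` in the successive peeling process, and `∞` if it is never assigned a rank. -/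
noncomputable def crank {Q : Type*} (B : Set Q) (D : LDAG Q) (v : ℕ × Q) : ℕ∞ :=
  sInf {k : ℕ∞ | ∃ n : ℕ, k = n ∧ v ∈ rankBelow B D (n + 1)}

end LDAG

section Helpers

theorem path_aux {α : Type*} (E : α → α → Prop) (S T : Set α)
    (hs : ∀ v ∈ S, ∃ w ∈ S, E v w)
    (hr : ∀ v ∈ S, ∃ w, Relation.ReflTransGen (fun a b => E a b ∧ a ∈ S ∧ b ∈ S) v w ∧ w ∈ T)
    (v : α) (hv : v ∈ S) :
    ∃ p : ℕ → α, p 0 = v ∧ (∀ n, E (p n) (p (n + 1))) ∧ ∀ m, ∃ n, m ≤ n ∧ p n ∈ T := by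
  classical
  let reach : ℕ → α → Prop := fun k => Nat.rec (motive := fun _ => α → Prop) (fun v => v ∈ T)
    (fun _ r v => ∃ w ∈ S, E v w ∧ r w) k
  have hreach : ∀ v ∈ S, ∃ k, reach k v := by
    intro v hv
    obtain ⟨w, hw, hT⟩ := hr v hv
    clear hv
    induction hw using Relation.ReflTransGen.head_induction_on with
    | refl => exact ⟨0, hT⟩
    | head h _ ih =>
      obtain ⟨k, hk⟩ := ih
      exact ⟨k + 1, _, h.2.2, h.1, hk⟩
  let d : α → ℕ := fun v => sInf {k | reach k v}
  have step : ∀ v : S, ∃ w : S, E v w ∧ (v.1 ∈ T ∨ d w < d v) := by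
    rintro ⟨v, hv⟩
    by_cases hT : v ∈ T
    · obtain ⟨w, hw, h⟩ := hs v hv
      exact ⟨⟨w, hw⟩, h, Or.inl hT⟩
    · have h1 : reach (d v) v := Nat.sInf_mem (s := {k | reach k v}) (hreach v hv)
      rcases hd : d v with _ | k
      · rw [hd] at h1; exact absurd h1 hT
      · rw [hd] at h1
        obtain ⟨w, hw, he, hk⟩ := h1
        refine ⟨⟨w, hw⟩, he, Or.inr ?_⟩
        have : d w ≤ k := Nat.sInf_le hk
        change d w < k + 1
        omega
  choose nx hE hd using step
  let p : ℕ → S := fun n => nx^[n] ⟨v, hv⟩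
  have hp : ∀ n, p (n + 1) = nx (p n) := fun n => Function.iterate_succ_apply' nx n _
  refine ⟨fun n => (p n).1, rfl, fun n => ?_, ?_⟩
  · simp only [hp]; exact hE _
  · have key : ∀ k m, d (p m) = k → ∃ n, m ≤ n ∧ (p n).1 ∈ T := by
      intro k
      induction k using Nat.strong_induction_on with
      | _ k ih =>
        intro m hm
        rcases hd (p m) with h | h
        · exact ⟨m, le_rfl, h⟩
        · rw [← hp, hm] at h
          obtain ⟨n, hn, hT⟩ := ih _ h (m + 1) rfl
          exact ⟨n, by omega, hT⟩
    exact fun m => key _ m rfl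

namespace LDAG

variable {Q : Type*} (B : Set Q) (D : LDAG Q)

theorem mem_even (hV : D.V = Set.univ) (i : ℕ) (v : ℕ × Q) :
    v ∈ rankBelow B D (2 * i + 1) ↔
      v ∈ rankBelow B D (2 * i) ∨ (v ∉ rankBelow B D (2 * i) ∧
        (D.induced (rankBelow B D (2 * i))ᶜ).Finitary v) := by
  rw [rankBelow, if_pos (by omega)]
  simp [induced, hV]

theorem mem_odd (hV : D.V = Set.univ) (i : ℕ) (v : ℕ × Q) :
    v ∈ rankBelow B D (2 * i + 2) ↔
      v ∈ rankBelow B D (2 * i + 1) ∨ (v ∉ rankBelow B D (2 * i + 1) ∧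
        (D.induced (rankBelow B D (2 * i + 1))ᶜ).BFree B v) := by
  rw [rankBelow, if_neg (by omega)]
  simp [induced, hV]

theorem rb_mono : Monotone (rankBelow B D) := by
  apply monotone_nat_of_le_succ
  intro k
  rw [rankBelow]
  exact Set.subset_union_left

theorem rec_notMem (v : ℕ × Q) (h : D.BRecurring B v) (k : ℕ) : v ∉ rankBelow B D k := by
  obtain ⟨p, rfl, hE, hB⟩ := h
  suffices ∀ n, p n ∉ rankBelow B D k from this 0
  have hlev : ∀ n, (p n).1 = (p 0).1 + n := by
    intro n
    induction n with
    | zero => rfl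
    | succ n ih => rw [D.edge_level (hE n), ih]; omega
  induction k with
  | zero => intro n; simp [rankBelow]
  | succ k ih =>
    intro n
    have hd : ∀ m, (D.induced (rankBelow B D k)ᶜ).Desc (p n) (p (n + m)) := by
      intro m
      induction m with
      | zero => exact Relation.ReflTransGen.refl
      | succ m ihm => exact ihm.tail ⟨hE _, ih _, ih _⟩
    rw [rankBelow]
    rintro (h | h)
    · exact ih n h
    · split_ifs at h
      · have hf : ({w | (D.induced (rankBelow B D k)ᶜ).Desc (p n) w}).Finite := h.2
        refine Set.infinite_of_injective_forall_mem (f := fun m => p (n + m)) ?_ hd hf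
        intro a b hab
        have h3 : (p (n + a)).1 = (p (n + b)).1 := congrArg Prod.fst hab
        rw [hlev (n + a), hlev (n + b)] at h3
        omega
      · obtain ⟨m, hm, hb⟩ := hB n
        obtain ⟨j, rfl⟩ := Nat.exists_eq_add_of_le hm
        exact h.2 _ (hd j) hb

theorem exists_succ [Finite Q] (hV : D.V = Set.univ) (i : ℕ) (v : ℕ × Q)
    (hv : v ∉ rankBelow B D (2 * i + 1)) : ∃ w, w ∉ rankBelow B D (2 * i + 1) ∧ D.E v w := by
  by_contra! hc
  have h0 := hv
  rw [mem_even B D hV] at hv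
  push Not at hv
  obtain ⟨hv0, hv1⟩ := hv
  apply hv1 hv0
  set G := D.induced (rankBelow B D (2 * i))ᶜ with hG
  have hfs : {w | G.E v w}.Finite := by
    refine ((Set.finite_singleton (v.1 + 1)).prod (Set.finite_univ (α := Q))).subset ?_
    intro w hw
    exact ⟨G.edge_level hw, trivial⟩
  have hU : (⋃ w ∈ {w | G.E v w}, {x | G.Desc w x}).Finite := by
    refine hfs.biUnion ?_
    intro w hw
    have h1 : w ∈ rankBelow B D (2 * i + 1) := by
      by_contra h
      exact hc w h hw.1
    rcases (mem_even B D hV i w).1 h1 with h | h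
    · exact absurd h hw.2.2
    · exact h.2
  refine (hU.insert v).subset ?_
  intro x hx
  rcases Relation.ReflTransGen.cases_head hx with h | ⟨w, hw, hwx⟩
  · exact Or.inl h.symm
  · refine Or.inr ?_
    simp only [Set.mem_iUnion]
    exact ⟨w, hw, hwx⟩

theorem rec_of_stable [Finite Q] (hV : D.V = Set.univ) (i : ℕ)
    (hst : ∀ v, v ∈ rankBelow B D (2 * i + 2) → v ∈ rankBelow B D (2 * i + 1))
    (v : ℕ × Q) (hv : v ∉ rankBelow B D (2 * i + 1)) : D.BRecurring B v := by
  refine path_aux D.E (rankBelow B D (2 * i + 1))ᶜ {w | w.2 ∈ B} ?_ ?_ v hv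
  · exact fun v hv => exists_succ B D hV i v hv
  · intro v hv
    by_contra! hc
    exact hv (hst v ((mem_odd B D hV i v).2 (Or.inr ⟨hv, hc⟩)))

theorem odd_persist [Finite Q] (hV : D.V = Set.univ) (i : ℕ) (v : ℕ × Q)
    (hv : v ∈ rankBelow B D (2 * i + 2)) (hv' : v ∉ rankBelow B D (2 * i + 1)) (l : ℕ) :
    ∃ q, q ∉ B ∧ (v.1 + l, q) ∈ rankBelow B D (2 * i + 2) ∧
      (v.1 + l, q) ∉ rankBelow B D (2 * i + 1) := by
  induction l with
  | zero =>
    refine ⟨v.2, ?_, hv, hv'⟩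
    rcases (mem_odd B D hV i v).1 hv with h | h
    · exact absurd h hv'
    · exact h.2 v Relation.ReflTransGen.refl
  | succ l ih =>
    obtain ⟨q, hq, h1, h2⟩ := ih
    obtain ⟨w, hw, hE⟩ := exists_succ B D hV i _ h2
    have hl := D.edge_level hE
    have hf : (D.induced (rankBelow B D (2 * i + 1))ᶜ).BFree B w := by
      rcases (mem_odd B D hV i _).1 h1 with h | h
      · exact absurd h h2
      · intro x hx
        exact h.2 x (Relation.ReflTransGen.head ⟨hE, h2, hw⟩ hx)
    have hwe : (v.1 + (l + 1), w.2) = w := Prod.ext (by simp only at hl ⊢; omega) rfl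
    refine ⟨w.2, hf w Relation.ReflTransGen.refl, ?_, ?_⟩
    · rw [hwe]; exact (mem_odd B D hV i w).2 (Or.inr ⟨hw, hf⟩)
    · rw [hwe]; exact hw

theorem exists_stable [Fintype Q] (hV : D.V = Set.univ) (hB : B.Nonempty) :
    ∃ i, i < Fintype.card Q ∧
      ∀ v, v ∈ rankBelow B D (2 * i + 2) → v ∈ rankBelow B D (2 * i + 1) := by
  classical
  by_contra! hc
  have : Nonempty Q := ⟨hB.some⟩
  choose! f hf hf' using hc
  let n := Fintype.card Q
  let L := ∑ i ∈ Finset.range n, (f i).1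
  have hq : ∀ i : Fin n, ∃ q, q ∉ B ∧ (L, q) ∈ rankBelow B D (2 * i + 2) ∧
      (L, q) ∉ rankBelow B D (2 * i + 1) := by
    intro i
    have hle : (f i).1 ≤ L := Finset.single_le_sum (f := fun i => (f i).1)
      (fun _ _ => Nat.zero_le _) (Finset.mem_range.2 i.2)
    obtain ⟨l, hl⟩ := Nat.exists_eq_add_of_le hle
    rw [hl]
    exact odd_persist B D hV i _ (hf _ i.2) (hf' _ i.2) l
  choose g hgB hg hg' using hq
  have hlt : ∀ a b : Fin n, a < b → g a ≠ g b := by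
    intro a b hab he
    have hab' : (a : ℕ) < b := hab
    apply hg' b
    rw [← he]
    exact rb_mono B D (by omega) (hg a)
  have hinj : Function.Injective g := by
    intro a b he
    rcases lt_trichotomy a b with h | h | h
    · exact absurd he (hlt _ _ h)
    · exact h
    · exact absurd he.symm (hlt _ _ h)
  have hbij := (Fintype.bijective_iff_injective_and_card g).2 ⟨hinj, by simp [n]⟩
  obtain ⟨b, hb⟩ := hB
  obtain ⟨a, rfl⟩ := hbij.2 b
  exact hgB a hb

theorem main_dich [Fintype Q] (hV : D.V = Set.univ) (v : ℕ × Q) :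
    v ∈ rankBelow B D (2 * Fintype.card Q) ∨ D.BRecurring B v := by
  have hpos : 0 < Fintype.card Q := Fintype.card_pos_iff.2 ⟨v.2⟩
  rcases B.eq_empty_or_nonempty with rfl | hB
  · left
    refine rb_mono _ D (show 2 * 0 + 2 ≤ _ by omega) ?_
    rw [mem_odd _ D hV]
    by_cases h : v ∈ rankBelow ∅ D (2 * 0 + 1)
    · exact Or.inl h
    · exact Or.inr ⟨h, fun _ _ => id⟩
  · obtain ⟨i, hi, hst⟩ := exists_stable B D hV hB
    by_cases h : v ∈ rankBelow B D (2 * i + 1)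
    · exact Or.inl (rb_mono B D (by omega) h)
    · exact Or.inr (rec_of_stable B D hV i hst v h)

theorem crank_top (v : ℕ × Q) (h : D.BRecurring B v) : crank B D v = ⊤ := by
  rw [crank, sInf_eq_top]
  rintro a ⟨n, rfl, hn⟩
  exact absurd hn (rec_notMem B D v h _)

theorem crank_lt (v : ℕ × Q) (k : ℕ) (h : v ∈ rankBelow B D k) : crank B D v < (k : ℕ) := by
  rcases k with _ | k
  · simp [rankBelow] at h
  · refine lt_of_le_of_lt (sInf_le ⟨k, rfl, h⟩) ?_
    exact_mod_cast Nat.lt_succ_self k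

end LDAG

end Helpers

/-- for a Büchi automaton `(Q, Δ, B)` with `n` states and the canonical
rank function `c` of the run DAG on an ω-word `u`, every vertex `v` satisfies
`c v < 2n` or `c v = ∞`, and `c v = ∞` iff `v` is `B`-recurring. -/
theorem crank_runDAG {Q A : Type*} [Fintype Q] (Δ : Set (Q × A × Q)) (B : Set Q)
    (u : ℕ → A) (v : ℕ × Q) :
    (LDAG.crank B (runDAG Δ u) v < (2 * Fintype.card Q : ℕ) ∨
      LDAG.crank B (runDAG Δ u) v = ⊤) ∧
    (LDAG.crank B (runDAG Δ u) v = ⊤ ↔ (runDAG Δ u).BRecurring B v) := by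
  rcases LDAG.main_dich B (runDAG Δ u) rfl v with h | h
  · have h1 := LDAG.crank_lt B (runDAG Δ u) v _ h
    exact ⟨Or.inl h1, fun ht => absurd ht (ne_top_of_lt h1),
      fun hr => LDAG.crank_top B _ v hr⟩
  · have h1 := LDAG.crank_top B _ v h
    exact ⟨Or.inr h1, fun _ => h, fun _ => h1⟩
end

section
/- Let (Q, Δ, B) be a nondeterministic Büchi automaton over an alphabet A, u an ω-word over A, and c the canonical rank function of the run DAG of the automaton on u. For every state q ∈ Q, the word u is accepted from q if and only if c(⟨0, q⟩) = ∞. -/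
/-- The ω-word `u` is accepted by the nondeterministic Büchi automaton with transition
relation `Δ` and Büchi set `B` from state `q`: there is a run starting in `q` that
visits `B` infinitely often. -/
def NBAAccepts {Q A : Type*} (Δ : Set (Q × A × Q)) (B : Set Q) (u : ℕ → A) (q : Q) :
    Prop :=
  ∃ r : ℕ → Q, r 0 = q ∧ (∀ i, (r i, u i, r (i + 1)) ∈ Δ) ∧
    ∀ m, ∃ i, m ≤ i ∧ r i ∈ B

namespace LDAG

lemma rb_mono_s12 {Q : Type*} (B : Set Q) (D : LDAG Q) {i j : ℕ} (h : i ≤ j) :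
    rankBelow B D i ⊆ rankBelow B D j := by
  induction j, h using Nat.le_induction with
  | base => exact subset_rfl
  | succ j _ ih =>
    intro v hv
    rw [rankBelow]
    exact Or.inl (ih hv)

lemma desc_of_path {Q : Type*} (D : LDAG Q) (p : ℕ → ℕ × Q)
    (hp : ∀ n, D.E (p n) (p (n + 1))) (n k : ℕ) : D.Desc (p n) (p (n + k)) := by
  induction k with
  | zero => exact Relation.ReflTransGen.refl
  | succ k ih => exact Relation.ReflTransGen.tail ih (hp (n + k))

/-- A recurring path is never peeled. -/
lemma path_not_mem {Q : Type*} (B : Set Q) (D : LDAG Q) (p : ℕ → ℕ × Q)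
    (hl : ∀ n, (p n).1 = n)
    (hp : ∀ n, D.E (p n) (p (n + 1))) (hB : ∀ m, ∃ n, m ≤ n ∧ (p n).2 ∈ B) (k : ℕ) :
    ∀ n, p n ∉ rankBelow B D k := by
  induction k with
  | zero => intro n h; exact h
  | succ k ih =>
    intro n h
    have hE : ∀ n, (D.induced (rankBelow B D k)ᶜ).E (p n) (p (n + 1)) :=
      fun n => ⟨hp n, ih n, ih (n + 1)⟩
    rw [rankBelow] at h
    rcases h with h | h
    · exact ih n h
    split_ifs at h
    · have hf : Set.Finite _ := h.2
      refine Set.infinite_of_injective_forall_mem (f := fun i => p (n + i)) ?_ ?_ hf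
      · intro a b hab
        have := congrArg Prod.fst hab
        simp only [hl] at this
        omega
      · intro i
        exact desc_of_path _ p hE n i
    · obtain ⟨m, hm, hmB⟩ := hB n
      obtain ⟨i, rfl⟩ := Nat.exists_eq_add_of_le hm
      exact h.2 _ (desc_of_path _ p hE n i) hmB

lemma exists_nonfinitary_succ {Q : Type*} [Finite Q] (D : LDAG Q) (v : ℕ × Q)
    (h : ¬ D.Finitary v) : ∃ w, D.E v w ∧ ¬ D.Finitary w := by
  by_contra! hc
  apply h
  have hs : {w | D.E v w}.Finite := by
    apply Set.Finite.subset ((Set.finite_univ (α := Q)).image (fun s => (v.1 + 1, s)))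
    intro w hw
    exact ⟨w.2, trivial, Prod.ext (D.edge_level hw).symm rfl⟩
  have hU : ({v} ∪ ⋃ w ∈ {w | D.E v w}, {x | D.Desc w x}).Finite :=
    (Set.finite_singleton v).union (hs.biUnion fun w hw => hc w hw)
  refine hU.subset ?_
  intro x hx
  rcases Relation.ReflTransGen.cases_head hx with h | ⟨w, hw, hwx⟩
  · exact Or.inl h.symm
  · exact Or.inr (Set.mem_biUnion (show w ∈ {w | D.E v w} from hw) hwx)

/-- After an even peeling step, every remaining vertex has a remaining successor. -/
lemma succ_odd {Q : Type*} [Finite Q] (B : Set Q) (D : LDAG Q) (hV : D.V = Set.univ) (k : ℕ)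
    (v : ℕ × Q) (hv : v ∉ rankBelow B D (2 * k + 1)) :
    ∃ w, D.E v w ∧ w ∉ rankBelow B D (2 * k + 1) := by
  have hk : 2 * k % 2 = 0 := by omega
  rw [rankBelow, if_pos hk] at hv ⊢
  have h1 : v ∉ rankBelow B D (2 * k) := fun h => hv (Or.inl h)
  have h2 : ¬ (D.induced (rankBelow B D (2 * k))ᶜ).Finitary v := fun h =>
    hv (Or.inr ⟨⟨hV ▸ trivial, h1⟩, h⟩)
  obtain ⟨w, hw, hwf⟩ := exists_nonfinitary_succ _ v h2
  refine ⟨w, hw.1, ?_⟩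
  rintro (h | h)
  · exact hw.2.2 h
  · exact hwf h.2

lemma exists_desc_level {Q : Type*} (D : LDAG Q) (S : Set (ℕ × Q))
    (hS : ∀ v ∈ S, ∃ w, D.E v w ∧ w ∈ S) (v : ℕ × Q) (hv : v ∈ S) (n : ℕ) :
    ∃ w, w ∈ S ∧ w.1 = v.1 + n ∧ (D.induced S).Desc v w := by
  induction n with
  | zero => exact ⟨v, hv, rfl, Relation.ReflTransGen.refl⟩
  | succ n ih =>
    obtain ⟨w, hw, hl, hd⟩ := ih
    obtain ⟨x, hx, hxS⟩ := hS w hw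
    refine ⟨x, hxS, ?_, Relation.ReflTransGen.tail hd ⟨hx, hw, hxS⟩⟩
    rw [D.edge_level hx, hl]; rfl

/-- At some odd stage no vertex is `B`-free. -/
lemma exists_stage {Q : Type*} [Fintype Q] (B : Set Q) (D : LDAG Q) (hV : D.V = Set.univ) :
    ∃ k, ∀ v, v ∉ rankBelow B D (2 * k + 1) →
      ¬ (D.induced (rankBelow B D (2 * k + 1))ᶜ).BFree B v := by
  by_contra! hc
  choose v hv hf using hc
  have key : ∀ k l, (v k).1 ≤ l → ∃ s : Q, (l, s) ∈ rankBelow B D (2 * k + 2) ∧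
      (l, s) ∉ rankBelow B D (2 * k + 1) := by
    intro k l hl
    obtain ⟨n, rfl⟩ := Nat.exists_eq_add_of_le hl
    obtain ⟨w, hw, hwl, hd⟩ := exists_desc_level D (rankBelow B D (2 * k + 1))ᶜ
      (fun v hv => succ_odd B D hV k v hv) (v k) (hv k) n
    refine ⟨w.2, ?_, ?_⟩
    · rw [← hwl, rankBelow, if_neg (by omega)]
      refine Or.inr ⟨⟨hV ▸ trivial, hw⟩, ?_⟩
      intro x hx
      exact hf k x (Relation.ReflTransGen.trans hd hx)
    · rw [← hwl]; exact hw
  let L := ∑ k ∈ Finset.range (Fintype.card Q + 1), (v k).1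
  have hL : ∀ k : Fin (Fintype.card Q + 1), (v k).1 ≤ L := fun k =>
    Finset.single_le_sum (f := fun k => (v k).1) (fun _ _ => Nat.zero_le _)
      (Finset.mem_range.2 k.2)
  choose s hs1 hs2 using fun k : Fin (Fintype.card Q + 1) => key k L (hL k)
  have lt_ne : ∀ a b : Fin (Fintype.card Q + 1), a < b → s a ≠ s b := by
    intro a b hab h
    apply hs2 b
    rw [← h]
    refine rb_mono_s12 B D ?_ (hs1 a)
    have : (a : ℕ) < b := hab
    omega
  have hinj : Function.Injective s := by
    intro a b hab
    rcases lt_trichotomy a b with h | h | h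
    · exact absurd hab (lt_ne a b h)
    · exact h
    · exact absurd hab.symm (lt_ne b a h)
  have := Fintype.card_le_of_injective s hinj
  simp at this

/-- `reachN D S B n v`: some `B`-tagged vertex is reachable inside `S` in `n` steps. -/
def reachN {Q : Type*} (D : LDAG Q) (S : Set (ℕ × Q)) (B : Set Q) : ℕ → ℕ × Q → Prop
  | 0, v => v.2 ∈ B
  | n + 1, v => ∃ w, D.E v w ∧ w ∈ S ∧ reachN D S B n w

lemma exists_reachN {Q : Type*} (D : LDAG Q) (S : Set (ℕ × Q)) (B : Set Q) (v w : ℕ × Q)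
    (h : (D.induced S).Desc v w) (hw : w.2 ∈ B) : ∃ n, reachN D S B n v := by
  induction h using Relation.ReflTransGen.head_induction_on with
  | refl => exact ⟨0, hw⟩
  | head h _ ih =>
    obtain ⟨n, hn⟩ := ih
    exact ⟨n + 1, _, h.1, h.2.2, hn⟩

lemma recurring_of {Q : Type*} (D : LDAG Q) (S : Set (ℕ × Q)) (B : Set Q)
    (hS : ∀ v ∈ S, ∃ w, D.E v w ∧ w ∈ S)
    (hB : ∀ v ∈ S, ¬ (D.induced S).BFree B v) (v : ℕ × Q) (hv : v ∈ S) :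
    D.BRecurring B v := by
  classical
  have hr : ∀ v ∈ S, ∃ n, reachN D S B n v := by
    intro v hv
    have := hB v hv
    unfold BFree at this
    push Not at this
    obtain ⟨w, hd, hw⟩ := this
    exact exists_reachN D S B v w hd hw
  have hstep : ∀ x : S, ∃ y : S, D.E x y ∧
      (x.1.2 ∈ B ∨ sInf {n | reachN D S B n y} < sInf {n | reachN D S B n x}) := by
    rintro ⟨x, hx⟩
    by_cases hxB : x.2 ∈ B
    · obtain ⟨w, hw, hwS⟩ := hS x hx
      exact ⟨⟨w, hwS⟩, hw, Or.inl hxB⟩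
    · have hm : reachN D S B (sInf {n | reachN D S B n x}) x :=
        Nat.sInf_mem (s := {n | reachN D S B n x}) (hr x hx)
      generalize hd : sInf {n | reachN D S B n x} = d at hm
      cases d with
      | zero => exact absurd hm hxB
      | succ d =>
        obtain ⟨w, hw, hwS, hwr⟩ := hm
        refine ⟨⟨w, hwS⟩, hw, Or.inr ?_⟩
        have : sInf {n | reachN D S B n w} ≤ d := Nat.sInf_le hwr
        simp only [hd]
        omega
  choose f hfE hfB using hstep
  let p : ℕ → S := fun n => f^[n] ⟨v, hv⟩
  have hps : ∀ n, p (n + 1) = f (p n) := fun n => Function.iterate_succ_apply' f n _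
  refine ⟨fun n => (p n).1, rfl, ?_, ?_⟩
  · intro n
    simp only [hps]
    exact hfE (p n)
  · have : ∀ d m, sInf {n | reachN D S B n (p m).1} = d → ∃ n, m ≤ n ∧ (p n).1.2 ∈ B := by
      intro d
      induction d using Nat.strong_induction_on with
      | _ d ih =>
        intro m hm
        rcases hfB (p m) with h | h
        · exact ⟨m, le_rfl, h⟩
        · rw [← hps, hm] at h
          obtain ⟨n, hn, hnB⟩ := ih _ h (m + 1) rfl
          exact ⟨n, by omega, hnB⟩
    exact fun m => this _ m rfl

lemma crank_eq_top {Q : Type*} (B : Set Q) (D : LDAG Q) (v : ℕ × Q) :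
    crank B D v = ⊤ ↔ ∀ n, v ∉ rankBelow B D n := by
  unfold crank
  rw [sInf_eq_top]
  constructor
  · intro h n hn
    have := h n ⟨n, rfl, rb_mono_s12 B D (Nat.le_succ n) hn⟩
    exact ENat.coe_ne_top n this
  · rintro h _ ⟨n, -, hn⟩
    exact absurd hn (h _)

end LDAG

/-- for a Büchi automaton `(Q, Δ, B)` and the canonical rank function
`c` of the run DAG on an ω-word `u`, the word `u` is accepted from the state `q` iff
`c ⟨0, q⟩ = ∞`. -/
theorem accepted_iff_crank_top {Q A : Type*} [Fintype Q] (Δ : Set (Q × A × Q))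
    (B : Set Q) (u : ℕ → A) (q : Q) :
    NBAAccepts Δ B u q ↔ LDAG.crank B (runDAG Δ u) (0, q) = ⊤ := by
  rw [LDAG.crank_eq_top]
  constructor
  · rintro ⟨r, rfl, hr, hB⟩ k
    exact LDAG.path_not_mem B (runDAG Δ u) (fun n => (n, r n)) (fun _ => rfl)
      (fun n => ⟨rfl, hr n⟩) hB k 0
  · intro h
    obtain ⟨k, hk⟩ := LDAG.exists_stage B (runDAG Δ u) rfl
    obtain ⟨p, hp0, hpE, hpB⟩ := LDAG.recurring_of (runDAG Δ u)
      (LDAG.rankBelow B (runDAG Δ u) (2 * k + 1))ᶜ B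
      (fun v hv => LDAG.succ_odd B _ rfl k v hv) hk (0, q) (h _)
    have hl : ∀ n, (p n).1 = n := by
      intro n
      induction n with
      | zero => rw [hp0]
      | succ n ih => rw [(hpE n).1, ih]
    refine ⟨fun n => (p n).2, by simp [hp0], ?_, hpB⟩
    intro i
    have := (hpE i).2
    rwa [hl] at this
end

section
/- There exists a constant C > 0 such that for every alphabet A and every nondeterministic Büchi automaton over A with n ≥ 1 states and initial state set I, there exists a backward deterministic automaton over A with a generalized transition Büchi recurrence condition and at most C · (2n(n+1))^n states which, augmented with a suitable set of initial states, recognizes the same ω-language. -/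
/-- A (backward) run of a backward deterministic automaton with transition function `ρ`
on the ω-word `u`: `r i = ρ (u i) (r (i+1))` for all `i`. -/
def IsBackRun {P A : Type*} (ρ : A → P → P) (u : ℕ → A) (r : ℕ → P) : Prop :=
  ∀ i, r i = ρ (u i) (r (i + 1))

/-- A run is final for the generalized transition Büchi condition `T` if for every `j`
the run uses a transition from `T j` infinitely often. -/
def GTBFinal {P A : Type*} {k : ℕ} (T : Fin k → Set (P × A × P)) (u : ℕ → A)
    (r : ℕ → P) : Prop :=
  ∀ j : Fin k, ∀ m : ℕ, ∃ i, m ≤ i ∧ (r i, u i, r (i + 1)) ∈ T j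

namespace BD
open Classical
set_option linter.unusedSectionVars false

section delay
variable {Q : Type} [Fintype Q]

theorem exists_opt (S : Q → Prop) (md : Prop) (f : Q → ℕ) (h : ∃ z, S z) :
    ∃ y, S y ∧ ∀ z, S z → (md → f z ≤ f y) ∧ (¬ md → f y ≤ f z) := by
  obtain ⟨z0, h0⟩ := h
  by_cases hm : md
  · obtain ⟨y, hy, h⟩ := Finset.exists_max_image (Finset.univ.filter S) f ⟨z0, by simpa using h0⟩
    exact ⟨y, by simpa using hy, fun z hz => ⟨fun _ => h z (by simpa using hz), fun h => absurd hm h⟩⟩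
  · obtain ⟨y, hy, h⟩ := Finset.exists_min_image (Finset.univ.filter S) f ⟨z0, by simpa using h0⟩
    exact ⟨y, by simpa using hy, fun z hz => ⟨fun h => absurd h hm, fun _ => h z (by simpa using hz)⟩⟩

noncomputable def opt (S : Q → Prop) (md : Prop) (f : Q → ℕ) : ℕ :=
  if h : ∃ y, S y ∧ ∀ z, S z → (md → f z ≤ f y) ∧ (¬ md → f y ≤ f z) then f h.choose else 0

theorem opt_spec (S : Q → Prop) (md : Prop) (f : Q → ℕ) (h : ∃ z, S z) :
    ∃ y, S y ∧ (∀ z, S z → (md → f z ≤ f y) ∧ (¬ md → f y ≤ f z)) ∧ opt S md f = f y := by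
  have h' := exists_opt S md f h
  refine ⟨h'.choose, h'.choose_spec.1, h'.choose_spec.2, ?_⟩
  simp only [opt, dif_pos h']

noncomputable def raw (R : Q → Prop) (S : Q → Q → Prop) (md : Q → Prop) (e : Q → ℕ) (q : Q) : ℕ :=
  if R q then 0 else 1 + opt (S q) (md q) e

noncomputable def norm (f : Q → ℕ) (q : Q) : ℕ := (Finset.univ.filter (fun x => f x < f q)).card

theorem norm_lt (f : Q → ℕ) (q : Q) : norm f q < Fintype.card Q := by
  apply Finset.card_lt_card
  rw [Finset.ssubset_univ_iff]
  intro h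
  have : q ∈ Finset.univ.filter (fun x => f x < f q) := by rw [h]; simp
  simp at this

theorem norm_le {f : Q → ℕ} {q q' : Q} : norm f q ≤ norm f q' ↔ f q ≤ f q' := by
  constructor
  · intro h
    by_contra hc
    push Not at hc
    apply absurd h
    push Not
    apply Finset.card_lt_card
    rw [Finset.ssubset_iff_of_subset]
    · exact ⟨q', by simpa using hc, by simp⟩
    · intro x hx
      simp only [Finset.mem_filter, Finset.mem_univ, true_and] at *
      omega
  · intro h
    apply Finset.card_le_card
    intro x hx
    simp only [Finset.mem_filter, Finset.mem_univ, true_and] at *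
    omega

theorem norm_congr {f g : Q → ℕ} (h : ∀ x y, f x ≤ f y ↔ g x ≤ g y) : norm f = norm g := by
  funext q
  unfold norm
  congr 1
  ext x
  simp only [Finset.mem_filter, Finset.mem_univ, true_and]
  have := h q x
  omega

variable (R : ℕ → Q → Prop) (S : ℕ → Q → Q → Prop) (md : ℕ → Q → Prop)

def D : ℕ → ℕ → Q → Prop
  | 0, i, q => R i q
  | t+1, i, q => R i q ∨ ((∃ z, S i q z) ∧ (md i q → ∀ z, S i q z → D t (i+1) z) ∧
      (¬ md i q → ∃ z, S i q z ∧ D t (i+1) z))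

variable {R S md}

theorem D_of_R {t i q} (h : R i q) : D R S md t i q := by
  cases t
  · exact h
  · exact Or.inl h

theorem D_succ {t : ℕ} : ∀ {i q}, D R S md t i q → D R S md (t+1) i q := by
  induction t with
  | zero => intro i q h; exact Or.inl h
  | succ t ih =>
    intro i q h
    rcases h with h | ⟨h0, h1, h2⟩
    · exact Or.inl h
    · refine Or.inr ⟨h0, fun hm z hz => ih (h1 hm z hz), fun hm => ?_⟩
      obtain ⟨z, hz, hd⟩ := h2 hm
      exact ⟨z, hz, ih hd⟩

theorem D_mono {s t : ℕ} (h : s ≤ t) {i q} (hd : D R S md s i q) : D R S md t i q := by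
  induction h with
  | refl => exact hd
  | step _ ih => exact D_succ ih

/-- key equivalence at an optimal successor -/
theorem D_opt {t i q y} (f : Q → ℕ) (hR : ¬ R i q) (hy : S i q y)
    (ho : ∀ z, S i q z → (md i q → f z ≤ f y) ∧ (¬ md i q → f y ≤ f z))
    (hf : ∀ z z', f z ≤ f z' → D R S md t (i+1) z' → D R S md t (i+1) z) :
    D R S md (t+1) i q ↔ D R S md t (i+1) y := by
  constructor
  · rintro (h | ⟨h0, h1, h2⟩)
    · exact absurd h hR
    · by_cases hm : md i q
      · exact h1 hm y hy
      · obtain ⟨z, hz, hd⟩ := h2 hm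
        exact hf _ _ ((ho z hz).2 hm) hd
  · intro h
    exact Or.inr ⟨⟨y, hy⟩, fun hm z hz => hf _ _ ((ho z hz).1 hm) h, fun _ => ⟨y, hy, h⟩⟩

section claim
variable {e : ℕ → Q → ℕ} (he : ∀ i, e i = norm (raw (R i) (S i) (md i) (e (i+1))))
  (hRS : ∀ i q, ¬ R i q → ∃ z, S i q z)
include he hRS

omit he in
theorem raw_spec (i q) (h : ¬ R i q) : ∃ y, S i q y ∧
    (∀ z, S i q z → (md i q → e (i+1) z ≤ e (i+1) y) ∧ (¬ md i q → e (i+1) y ≤ e (i+1) z)) ∧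
    raw (R i) (S i) (md i) (e (i+1)) q = 1 + e (i+1) y := by
  obtain ⟨y, h1, h2, h3⟩ := opt_spec (S i q) (md i q) (e (i+1)) (hRS i q h)
  exact ⟨y, h1, h2, by rw [raw, if_neg h, h3]⟩

omit he hRS in
theorem raw_R {i q} (h : R i q) : raw (R i) (S i) (md i) (e (i+1)) q = 0 := by
  rw [raw, if_pos h]

omit hRS in
theorem e_le {i q q'} : e i q ≤ e i q' ↔
    raw (R i) (S i) (md i) (e (i+1)) q ≤ raw (R i) (S i) (md i) (e (i+1)) q' := by
  conv_lhs => rw [he i]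
  exact norm_le

theorem lemA {t : ℕ} : ∀ {i q q'}, e i q ≤ e i q' → D R S md t i q' → D R S md t i q := by
  induction t with
  | zero =>
    intro i q q' h hd
    rw [e_le he, raw_R (show R i q' from hd)] at h
    by_contra hR
    obtain ⟨y, -, -, h3⟩ := raw_spec hRS (e := e) (md := md) i q hR
    omega
  | succ t ih =>
    intro i q q' h hd
    by_cases hq : R i q
    · exact D_of_R hq
    rw [e_le he] at h
    obtain ⟨y, h1, h2, h3⟩ := raw_spec hRS (e := e) (md := md) i q hq
    by_cases hq' : R i q'
    · rw [raw_R hq'] at h; omega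
    obtain ⟨y', h1', h2', h3'⟩ := raw_spec hRS (e := e) (md := md) i q' hq'
    rw [D_opt (e (i+1)) hq' h1' h2' (fun z z' => ih)] at hd
    rw [D_opt (e (i+1)) hq h1 h2 (fun z z' => ih)]
    exact ih (by omega) hd

theorem lemB {t : ℕ} : ∀ {i q q'}, e i q < e i q' → D R S md t i q' →
    ∃ s, t = s + 1 ∧ D R S md s i q := by
  induction t with
  | zero =>
    intro i q q' h hd
    rw [← not_le, e_le he, raw_R (show R i q' from hd)] at h
    omega
  | succ t ih =>
    intro i q q' h hd
    refine ⟨t, rfl, ?_⟩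
    by_cases hq : R i q
    · exact D_of_R hq
    rw [← not_le, e_le he] at h
    obtain ⟨y, h1, h2, h3⟩ := raw_spec hRS (e := e) (md := md) i q hq
    by_cases hq' : R i q'
    · rw [raw_R hq'] at h; omega
    obtain ⟨y', h1', h2', h3'⟩ := raw_spec hRS (e := e) (md := md) i q' hq'
    rw [D_opt (e (i+1)) hq' h1' h2' (fun z z' => lemA he hRS)] at hd
    obtain ⟨s, rfl, hs⟩ := ih (q := y) (by omega) hd
    rw [D_opt (e (i+1)) hq h1 h2 (fun z z' => lemA he hRS)]
    exact hs

theorem lemFin (hg : ∀ m, ∃ i, m ≤ i ∧ ∀ q, ∃ z, raw (R i) (S i) (md i) (e (i+1)) q ≤ e (i+1) z)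
    (i q) : ∃ t, D R S md t i q := by
  set U : ℕ → Finset Q := fun i => Finset.univ.filter (fun q => ∀ t, ¬ D R S md t i q) with hU
  have memU : ∀ i q, q ∈ U i ↔ ∀ t, ¬ D R S md t i q := by intro i q; simp [hU]
  -- optimal successor in U
  have step : ∀ i q, q ∈ U i → ∃ y ∈ U (i+1),
      raw (R i) (S i) (md i) (e (i+1)) q = 1 + e (i+1) y := by
    intro i q hq
    rw [memU] at hq
    obtain ⟨y, h1, h2, h3⟩ := raw_spec hRS (e := e) (md := md) i q (hq 0)
    refine ⟨y, ?_, h3⟩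
    rw [memU]
    intro t ht
    exact hq (t+1) ((D_opt (e (i+1)) (hq 0) h1 h2 (fun z z' => lemA he hRS)).2 ht)
  have up : ∀ i q q', q ∈ U i → e i q ≤ e i q' → q' ∈ U i := by
    intro i q q' hq h
    rw [memU] at *
    exact fun t ht => hq t (lemA he hRS h ht)
  set N : ℕ → ℕ := fun i => ((U i).image (e i)).card with hN
  have hraw : ∀ i, N i = ((U i).image (raw (R i) (S i) (md i) (e (i+1)))).card := by
    intro i
    have : (U i).image (e i) = ((U i).image (raw (R i) (S i) (md i) (e (i+1)))).image
        (fun v => (Finset.univ.filter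
          (fun x => raw (R i) (S i) (md i) (e (i+1)) x < v)).card) := by
      rw [Finset.image_image]
      conv_lhs => rw [he i]
      rfl
    simp only [hN]
    rw [this]
    apply Finset.card_image_of_injOn
    intro a ha b hb hab
    simp only [Finset.coe_image, Set.mem_image] at ha hb
    obtain ⟨x, -, rfl⟩ := ha
    obtain ⟨y, -, rfl⟩ := hb
    have h1 := (norm_le (f := raw (R i) (S i) (md i) (e (i+1))) (q := x) (q' := y)).1 (le_of_eq hab)
    have h2 := (norm_le (f := raw (R i) (S i) (md i) (e (i+1))) (q := y) (q' := x)).1 (ge_of_eq hab)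
    omega
  have hsub : ∀ i, (U i).image (raw (R i) (S i) (md i) (e (i+1))) ⊆
      ((U (i+1)).image (e (i+1))).image (fun v => 1 + v) := by
    intro i v hv
    simp only [Finset.mem_image] at hv
    obtain ⟨q, hq, rfl⟩ := hv
    obtain ⟨y, hy, h⟩ := step i q hq
    rw [h]
    exact Finset.mem_image_of_mem _ (Finset.mem_image_of_mem _ hy)
  have hcard : ∀ i, (((U (i+1)).image (e (i+1))).image (fun v => 1 + v)).card = N (i+1) := by
    intro i
    exact Finset.card_image_of_injective _ (fun a b h => by simpa using h)
  have mono : Monotone N := by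
    apply monotone_nat_of_le_succ
    intro i
    rw [hraw i, ← hcard i]
    exact Finset.card_le_card (hsub i)
  by_contra hcon
  push Not at hcon
  have hne0 : (U i).Nonempty := ⟨q, (memU i q).2 hcon⟩
  have hne : ∀ j, i ≤ j → (U j).Nonempty := by
    intro j hj
    induction hj with
    | refl => exact hne0
    | step _ ih =>
      obtain ⟨x, hx⟩ := ih
      obtain ⟨y, hy, -⟩ := step _ x hx
      exact ⟨y, hy⟩
  have strict : ∀ j, i ≤ j → (∀ q, ∃ z, raw (R j) (S j) (md j) (e (j+1)) q ≤ e (j+1) z) →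
      N j < N (j+1) := by
    intro j hj hgood
    rw [hraw j, ← hcard j]
    apply Finset.card_lt_card
    rw [Finset.ssubset_iff_of_subset (hsub j)]
    obtain ⟨x, hx⟩ := hne (j+1) (by omega)
    obtain ⟨m, -, hm⟩ := Finset.exists_max_image Finset.univ (e (j+1)) ⟨x, Finset.mem_univ x⟩
    refine ⟨1 + e (j+1) m, Finset.mem_image_of_mem _ (Finset.mem_image_of_mem _
      (up _ x m hx (hm x (Finset.mem_univ _)))), ?_⟩
    intro h
    simp only [Finset.mem_image] at h
    obtain ⟨q, -, hq⟩ := h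
    obtain ⟨z, hz⟩ := hgood q
    have := hm z (Finset.mem_univ _)
    omega
  have unb : ∀ k, ∃ j, i ≤ j ∧ k ≤ N j := by
    intro k
    induction k with
    | zero => exact ⟨i, le_rfl, Nat.zero_le _⟩
    | succ k ih =>
      obtain ⟨j, hj, hk⟩ := ih
      obtain ⟨j', hj', hg'⟩ := hg j
      have h1 := strict j' (by omega) hg'
      have h2 := mono hj'
      exact ⟨j'+1, by omega, by omega⟩
  obtain ⟨j, -, hj⟩ := unb (Fintype.card Q + 1)
  have : N j ≤ Fintype.card Q := Finset.card_image_le.trans (Finset.card_le_univ _)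
  omega

theorem e_iff (hfin : ∀ i q, ∃ t, D R S md t i q) (i q q') :
    e i q ≤ e i q' ↔ ∀ t, D R S md t i q' → D R S md t i q := by
  constructor
  · exact fun h t => lemA he hRS h
  · intro h
    by_contra hc
    push Not at hc
    have h1 := Nat.find_spec (hfin i q)
    obtain ⟨s, hs, hd⟩ := lemB he hRS hc h1
    exact Nat.find_min (hfin i q) (by omega) (h s hd)

end claim

theorem e_unique {e e' : ℕ → Q → ℕ}
    (he : ∀ i, e i = norm (raw (R i) (S i) (md i) (e (i+1))))
    (he' : ∀ i, e' i = norm (raw (R i) (S i) (md i) (e' (i+1))))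
    (hRS : ∀ i q, ¬ R i q → ∃ z, S i q z)
    (hfin : ∀ i q, ∃ t, D R S md t i q) : e = e' := by
  funext i
  rw [he i, he' i]
  apply norm_congr
  intro x y
  rw [← e_le he, ← e_le he', e_iff he hRS hfin, e_iff he' hRS hfin]

theorem e_exists (hRS : ∀ i q, ¬ R i q → ∃ z, S i q z)
    (hfin : ∀ i q, ∃ t, D R S md t i q) : ∃ e : ℕ → Q → ℕ,
    (∀ i q, e i q < Fintype.card Q) ∧
    (∀ i, e i = norm (raw (R i) (S i) (md i) (e (i+1)))) ∧
    (∀ m, ∃ i, m ≤ i ∧ ∀ q, ∃ z, raw (R i) (S i) (md i) (e (i+1)) q ≤ e (i+1) z) := by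
  set δ : ℕ → Q → ℕ := fun i q => Nat.find (hfin i q) with hδ
  have hD : ∀ t i q, D R S md t i q ↔ δ i q ≤ t := by
    intro t i q
    constructor
    · exact fun h => Nat.find_min' _ h
    · exact fun h => D_mono h (Nat.find_spec (hfin i q))
  have hz : ∀ i q, R i q → δ i q = 0 := fun i q h => by
    have := (hD 0 i q).1 h
    omega
  have hs : ∀ i q, ¬ R i q → ∃ y, raw (R i) (S i) (md i) (norm (δ (i+1))) q
      = 1 + norm (δ (i+1)) y ∧ δ i q = 1 + δ (i+1) y := by
    intro i q h
    obtain ⟨y, h1, h2, h3⟩ := raw_spec hRS (e := fun i => norm (δ i)) (md := md) i q h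
    refine ⟨y, h3, ?_⟩
    have key : ∀ t, δ i q ≤ t + 1 ↔ δ (i+1) y ≤ t := by
      intro t
      rw [← hD, ← hD]
      apply D_opt (norm (δ (i+1))) h h1 h2
      intro z z' hzz
      rw [norm_le] at hzz
      rw [hD, hD]; omega
    have h0 : δ i q ≠ 0 := by
      intro h0
      exact h ((hD 0 i q).2 (by omega))
    have k1 := (key (δ (i+1) y)).2 le_rfl
    have k2 := (key (δ i q - 1)).1 (by omega)
    omega
  refine ⟨fun i => norm (δ i), fun i q => norm_lt _ _, ?_, ?_⟩
  · intro i
    apply norm_congr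
    intro x y
    by_cases hx : R i x
    · rw [hz i x hx, raw_R (e := fun i => norm (δ i)) hx]; simp
    obtain ⟨x', a1, a2⟩ := hs i x hx
    by_cases hy : R i y
    · rw [hz i y hy, raw_R (e := fun i => norm (δ i)) hy]
      simp only [a1, a2]
      omega
    obtain ⟨y', b1, b2⟩ := hs i y hy
    simp only [a1, a2, b1, b2]
    have := norm_le (f := δ (i+1)) (q := x') (q' := y')
    omega
  · intro m
    by_contra hc
    push Not at hc
    have unb : ∀ k i, m ≤ i → ∃ q, k ≤ δ i q := by
      intro k
      induction k with
      | zero =>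
        intro i hi
        obtain ⟨q, -⟩ := hc i hi
        exact ⟨q, Nat.zero_le _⟩
      | succ k ih =>
        intro i hi
        obtain ⟨q, hq⟩ := hc i hi
        obtain ⟨z, hz'⟩ := ih (i+1) (by omega)
        have hR : ¬ R i q := by
          intro hR
          have := hq z
          rw [raw_R (e := fun i => norm (δ i)) hR] at this
          omega
        obtain ⟨y, h1, h2⟩ := hs i q hR
        have h3 := hq z
        rw [h1] at h3
        have := (norm_le (f := δ (i+1)) (q := z) (q' := y)).1 (by omega)
        exact ⟨q, by omega⟩
    obtain ⟨q, hq⟩ := unb (Finset.univ.sup (δ m) + 1) m le_rfl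
    have := Finset.le_sup (f := δ m) (Finset.mem_univ q)
    omega

end delay

section graph
variable {Q : Type} [Fintype Q] (E : ℕ → Q → Q → Prop) (B : Q → Prop)

def EG (X : ℕ → Q → Prop) (i : ℕ) (q : Q) : Prop :=
  ∃ Y : ℕ → Q → Prop, Y i q ∧ ∀ j z, Y j z → X j z ∧ ∃ w, E j z w ∧ Y (j+1) w

def EFn (X : ℕ → Q → Prop) : ℕ → ℕ → Q → Prop
  | 0, i, q => X i q
  | t+1, i, q => ∃ w, E i q w ∧ EFn X t (i+1) w

def EF (X : ℕ → Q → Prop) (i : ℕ) (q : Q) : Prop := ∃ t, EFn E X t i q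

def G : ℕ → ℕ → Q → Prop
  | 0 => fun _ _ => True
  | m+1 => if Even m then EG E (G m) else EF E (fun i q => B q ∧ G m i q)

def Acc (i : ℕ) (q : Q) : Prop :=
  ∃ p : ℕ → Q, p i = q ∧ (∀ j, i ≤ j → E j (p j) (p (j+1))) ∧ ∀ m, ∃ j, m ≤ j ∧ B (p j)

variable {E B}

theorem EG_step {X : ℕ → Q → Prop} {i q} (h : EG E X i q) : X i q ∧ ∃ w, E i q w ∧ EG E X (i+1) w := by
  obtain ⟨Y, h1, h2⟩ := h
  obtain ⟨h3, w, h4, h5⟩ := h2 i q h1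
  exact ⟨h3, w, h4, Y, h5, h2⟩

theorem EG_cons {X : ℕ → Q → Prop} {i q w} (hX : X i q) (hE : E i q w) (h : EG E X (i+1) w) :
    EG E X i q := by
  refine ⟨fun j z => (j = i ∧ z = q) ∨ EG E X j z, Or.inl ⟨rfl, rfl⟩, ?_⟩
  rintro j z (⟨rfl, rfl⟩ | h')
  · exact ⟨hX, w, hE, Or.inr h⟩
  · obtain ⟨a, w, b, c⟩ := EG_step h'
    exact ⟨a, w, b, Or.inr c⟩

theorem EF_cons {X : ℕ → Q → Prop} {i q w} (hE : E i q w) (h : EF E X (i+1) w) : EF E X i q := by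
  obtain ⟨t, ht⟩ := h
  exact ⟨t+1, w, hE, ht⟩

theorem G_even {m} (h : Even m) : G E B (m+1) = EG E (G E B m) := by
  rw [G, if_pos h]

theorem G_odd {m} (h : ¬ Even m) : G E B (m+1) = EF E (fun i q => B q ∧ G E B m i q) := by
  rw [G, if_neg h]

theorem G_pred (m : ℕ) : ∀ {i q w}, E i q w → G E B m (i+1) w → G E B m i q := by
  induction m with
  | zero => intros; trivial
  | succ m ih =>
    intro i q w hE h
    by_cases hm : Even m
    · rw [G_even hm] at *
      exact EG_cons (ih hE (EG_step h).1) hE h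
    · rw [G_odd hm] at *
      exact EF_cons hE h

theorem EF_pred_closed {X Y : ℕ → Q → Prop} (hXY : ∀ i q, X i q → Y i q)
    (hp : ∀ i q w, E i q w → Y (i+1) w → Y i q) {i q} (h : EF E X i q) : Y i q := by
  obtain ⟨t, ht⟩ := h
  induction t generalizing i q with
  | zero => exact hXY _ _ ht
  | succ t ih =>
    obtain ⟨w, hE, hw⟩ := ht
    exact hp _ _ _ hE (ih hw)

theorem G_dec {m i q} (h : G E B (m+1) i q) : G E B m i q := by
  by_cases hm : Even m
  · rw [G_even hm] at h
    exact (EG_step h).1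
  · rw [G_odd hm] at h
    exact EF_pred_closed (fun i q h => h.2) (fun i q w => G_pred m) h

theorem G_anti {m m' i q} (hm : m ≤ m') (h : G E B m' i q) : G E B m i q := by
  induction hm with
  | refl => exact h
  | step _ ih => exact ih (G_dec h)

theorem Acc_G (m : ℕ) : ∀ {i q}, Acc E B i q → G E B m i q := by
  induction m with
  | zero => intros; trivial
  | succ m ih =>
    intro i q h
    by_cases hm : Even m
    · rw [G_even hm]
      refine ⟨Acc E B, h, ?_⟩
      rintro j z hz
      refine ⟨ih hz, ?_⟩
      obtain ⟨p, rfl, h1, h2⟩ := hz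
      exact ⟨p (j+1), h1 j le_rfl, p, rfl, fun k hk => h1 k (by omega), h2⟩
    · rw [G_odd hm]
      obtain ⟨p, rfl, h1, h2⟩ := h
      obtain ⟨j, hj, hB⟩ := h2 i
      obtain ⟨d, rfl⟩ := Nat.exists_eq_add_of_le hj
      refine ⟨d, ?_⟩
      clear hj
      induction d generalizing i with
      | zero => exact ⟨hB, ih ⟨p, rfl, h1, h2⟩⟩
      | succ d ihd =>
        refine ⟨p (i+1), h1 i le_rfl, ihd (fun k hk => h1 k (by omega)) ?_⟩
        have : i + 1 + d = i + (d+1) := by omega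
        rw [this]; exact hB

theorem build (Y : ℕ → ℕ → Q → Prop)
    (hY : ∀ t j z, Y t j z → ∃ w t', E j z w ∧ Y t' (j+1) w ∧ (B z ∨ t' < t))
    {t i q} (h : Y t i q) : Acc E B i q := by
  choose! g s h1 h2 h3 using hY
  let st : ℕ → Q × ℕ := fun k => Nat.rec (q, t) (fun k x => (g x.2 (i+k) x.1, s x.2 (i+k) x.1)) k
  have st0 : st 0 = (q, t) := rfl
  have stS : ∀ k, st (k+1) = (g (st k).2 (i+k) (st k).1, s (st k).2 (i+k) (st k).1) := fun k => rfl
  have inv : ∀ k, Y (st k).2 (i+k) (st k).1 := by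
    intro k
    induction k with
    | zero => exact h
    | succ k ih => rw [stS]; exact h2 _ _ _ ih
  have hB : ∀ d k, (st k).2 ≤ d → ∃ k', k ≤ k' ∧ B (st k').1 := by
    intro d
    induction d with
    | zero =>
      intro k hk
      rcases h3 _ _ _ (inv k) with hb | hlt
      · exact ⟨k, le_rfl, hb⟩
      · omega
    | succ d ih =>
      intro k hk
      rcases h3 _ _ _ (inv k) with hb | hlt
      · exact ⟨k, le_rfl, hb⟩
      · obtain ⟨k', a, b⟩ := ih (k+1) (by rw [stS]; simp only; omega)
        exact ⟨k', by omega, b⟩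
  refine ⟨fun j => (st (j - i)).1, by simp [st0], ?_, ?_⟩
  · intro j hj
    obtain ⟨k, rfl⟩ := Nat.exists_eq_add_of_le hj
    have e1 : i + k - i = k := by omega
    have e2 : i + k + 1 - i = k + 1 := by omega
    simp only [e1, e2, stS]
    exact h1 _ _ _ (inv k)
  · intro m
    obtain ⟨k', a, b⟩ := hB _ m le_rfl
    refine ⟨i + k', by omega, ?_⟩
    have e1 : i + k' - i = k' := by omega
    simpa only [e1] using b

theorem acc_of_notEF {m i q} (hm : ¬ Even m) (h : G E B m i q)
    (hn : ¬ EF E (fun i q => G E B m i q ∧ ¬ G E B (m+1) i q) i q) : Acc E B i q := by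
  obtain ⟨k, rfl⟩ := Nat.not_even_iff_odd.1 hm
  have hn0 : ∀ j z, G E B (2*k+1) j z →
      ¬ EF E (fun i q => G E B (2*k+1) i q ∧ ¬ G E B (2*k+1+1) i q) j z →
      EF E (fun i q => B q ∧ G E B (2*k+1) i q) j z := by
    intro j z h1 h2
    by_contra h3
    exact h2 ⟨0, h1, by rw [G_odd hm]; exact h3⟩
  obtain ⟨t, ht⟩ := hn0 i q h hn
  refine build (fun t j z => EFn E (fun i q => B q ∧ G E B (2*k+1) i q) t j z ∧
    ¬ EF E (fun i q => G E B (2*k+1) i q ∧ ¬ G E B (2*k+1+1) i q) j z) ?_ ⟨ht, hn⟩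
  rintro t j z ⟨h1, h2⟩
  cases t with
  | zero =>
    have h3 := h1.2
    rw [G_even (by simp)] at h3
    obtain ⟨-, w, hE, hw⟩ := EG_step h3
    rw [← G_even (by simp)] at hw
    have hw2 : ¬ EF E (fun i q => G E B (2*k+1) i q ∧ ¬ G E B (2*k+1+1) i q) (j+1) w :=
      fun h' => h2 (EF_cons hE h')
    obtain ⟨t', ht'⟩ := hn0 _ _ hw hw2
    exact ⟨w, t', hE, ⟨ht', hw2⟩, Or.inl h1.1⟩
  | succ t =>
    obtain ⟨w, hE, hw⟩ := h1
    exact ⟨w, t, hE, ⟨hw, fun h' => h2 (EF_cons hE h')⟩, Or.inr (by omega)⟩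

theorem EF_level {X : ℕ → Q → Prop} {i q} (h : EF E X i q) : ∃ j z, X j z := by
  obtain ⟨t, ht⟩ := h
  induction t generalizing i q with
  | zero => exact ⟨i, q, ht⟩
  | succ t ih =>
    obtain ⟨w, _, hw⟩ := ht
    exact ih hw

theorem G_top_acc {i q} (h : G E B (2 * Fintype.card Q + 1) i q) : Acc E B i q := by
  by_contra hna
  have key : ∀ k : Fin (Fintype.card Q + 1), ∃ j0, ∀ j, j0 ≤ j →
      ∃ z, G E B (2*k.1+1) j z ∧ ¬ G E B (2*k.1+1+1) j z := by
    intro k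
    have hk : G E B (2*k.1+1) i q := G_anti (by omega) h
    have hodd : ¬ Even (2*k.1+1) := by simp
    have hEF : EF E (fun i q => G E B (2*k.1+1) i q ∧ ¬ G E B (2*k.1+1+1) i q) i q := by
      by_contra hn
      exact hna (acc_of_notEF hodd hk hn)
    obtain ⟨j0, z, hz⟩ := EF_level hEF
    refine ⟨j0, fun j hj => ?_⟩
    induction hj with
    | refl => exact ⟨z, hz⟩
    | step _ ih =>
      obtain ⟨z, h1, h2⟩ := ih
      rw [G_even (by simp)] at h1
      obtain ⟨-, w, hE, hw⟩ := EG_step h1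
      rw [← G_even (by simp)] at hw
      exact ⟨w, hw, fun h' => h2 (G_pred _ hE h')⟩
  choose j0 hj0 using key
  choose z hz1 hz2 using fun k => hj0 k (Finset.univ.sup j0) (Finset.le_sup (Finset.mem_univ k))
  have aux : ∀ a b : Fin (Fintype.card Q + 1), a < b → z a ≠ z b := by
    intro a b hab heq
    apply hz2 a
    rw [heq]
    have : a.1 < b.1 := hab
    exact G_anti (by omega) (hz1 b)
  have inj : Function.Injective z := by
    intro a b hab
    rcases lt_trichotomy a b with h | h | h
    · exact absurd hab (aux _ _ h)
    · exact h
    · exact absurd hab.symm (aux _ _ h)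
  have := Fintype.card_le_of_injective z inj
  simp at this

end graph

section rank
variable {Q : Type} [Fintype Q]

noncomputable def mx (E : Q → Q → Prop) (c : Q → ℕ) (q : Q) : ℕ :=
  (Finset.univ.filter (fun z => E q z)).sup c

noncomputable def rs (N : ℕ) (E : Q → Q → Prop) (B : Q → Prop) (c : Q → ℕ) (q : Q) : ℕ :=
  if B q ∧ Odd (mx E c q) ∧ mx E c q < N then mx E c q + 1 else mx E c q

def Sc (E : Q → Q → Prop) (c c' : Q → ℕ) (q z : Q) : Prop := E q z ∧ c' z = c q

def Rs (E : Q → Q → Prop) (B : Q → Prop) (c c' : Q → ℕ) (q : Q) : Prop :=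
  (∀ z, ¬ Sc E c c' q z) ∨ (Odd (c q) ∧ (c q = 1 ∨ B q ∨ ∃ z, E q z ∧ c' z + 1 = c q))

def Md (c : Q → ℕ) (q : Q) : Prop := Even (c q)

theorem le_mx {E : Q → Q → Prop} {c : Q → ℕ} {q z} (h : E q z) : c z ≤ mx E c q :=
  Finset.le_sup (f := c) (by simpa using h)

theorem mx_att {E : Q → Q → Prop} {c : Q → ℕ} {q} (h : 1 ≤ mx E c q) :
    ∃ z, E q z ∧ c z = mx E c q := by
  have hne : (Finset.univ.filter (fun z => E q z)).Nonempty := by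
    by_contra hn
    rw [Finset.not_nonempty_iff_eq_empty] at hn
    simp [mx, hn] at h
  obtain ⟨z, hz, h⟩ := Finset.exists_mem_eq_sup _ hne c
  exact ⟨z, by simpa using hz, h.symm⟩

theorem mx_le {E : Q → Q → Prop} {c : Q → ℕ} {q N} (h : ∀ z, c z ≤ N) : mx E c q ≤ N :=
  Finset.sup_le (fun z _ => h z)

theorem rs_le {N} {E : Q → Q → Prop} {B : Q → Prop} {c : Q → ℕ} (h : ∀ z, c z ≤ N) (q) :
    rs N E B c q ≤ N := by
  have := mx_le (E := E) (q := q) h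
  unfold rs
  split_ifs <;> omega

theorem P1 {N} {E : Q → Q → Prop} {B : Q → Prop} {c : Q → ℕ} {q z} (h : E q z) :
    c z ≤ rs N E B c q := by
  have := le_mx (c := c) h
  unfold rs
  split_ifs <;> omega

theorem P2 {N} {E : Q → Q → Prop} {B : Q → Prop} {c : Q → ℕ} {q} (h : 1 ≤ rs N E B c q) :
    ∃ z, E q z ∧ (rs N E B c q = c z ∨ (B q ∧ Odd (c z) ∧ rs N E B c q = c z + 1)) := by
  unfold rs at *
  split_ifs at h ⊢ with h1
  · obtain ⟨z, h2, h3⟩ := mx_att (E := E) (c := c) (q := q) (h1.2.1.pos)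
    exact ⟨z, h2, Or.inr ⟨h1.1, h3 ▸ h1.2.1, by rw [h3]⟩⟩
  · obtain ⟨z, h2, h3⟩ := mx_att (E := E) (c := c) (q := q) h
    exact ⟨z, h2, Or.inl h3.symm⟩

theorem P3 {N} {E : Q → Q → Prop} {B : Q → Prop} {c : Q → ℕ} {q} (hB : B q)
    (h : Odd (rs N E B c q)) : N ≤ rs N E B c q := by
  unfold rs at *
  split_ifs at h ⊢ with h1
  · have h2 := h1.2.1
    rw [Nat.odd_iff] at h h2
    omega
  · by_contra hc
    exact h1 ⟨hB, h, by omega⟩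

variable {E : ℕ → Q → Q → Prop} {B : Q → Prop} {N : ℕ} {c : ℕ → Q → ℕ}

theorem Rs_S (i q) (h : ¬ Rs (E i) B (c i) (c (i+1)) q) : ∃ z, Sc (E i) (c i) (c (i+1)) q z := by
  by_contra hn
  push Not at hn
  exact h (Or.inl hn)

section claim
variable (hN : Odd N) (hc : ∀ i, c i = rs N (E i) B (c (i+1)))

abbrev DD (E : ℕ → Q → Q → Prop) (B : Q → Prop) (c : ℕ → Q → ℕ) : ℕ → ℕ → Q → Prop :=
  D (fun i => Rs (E i) B (c i) (c (i+1))) (fun i => Sc (E i) (c i) (c (i+1))) (fun i => Md (c i))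

include hc in
theorem even_reach {m : ℕ} (hm : Odd m) (t : ℕ) : ∀ {i q}, DD E B c t i q → Even (c i q) →
    m + 1 ≤ c i q → EF E (fun i q => B q ∧ m ≤ c i q) i q := by
  induction t with
  | zero =>
    intro i q hd he hle
    obtain ⟨z, hz, h⟩ := P2 (N := N) (E := E i) (B := B) (c := c (i+1)) (q := q)
      (by rw [← hc i]; omega)
    rw [← hc i] at h
    by_cases hB : B q
    · exact ⟨0, hB, by omega⟩
    have h1 : c i q = c (i+1) z := by tauto
    rcases hd with hd | hd
    · exact absurd ⟨hz, h1.symm⟩ (hd z)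
    · exact absurd he (Nat.not_even_iff_odd.2 hd.1)
  | succ t ih =>
    intro i q hd he hle
    obtain ⟨z, hz, h⟩ := P2 (N := N) (E := E i) (B := B) (c := c (i+1)) (q := q)
      (by rw [← hc i]; omega)
    rw [← hc i] at h
    by_cases hB : B q
    · exact ⟨0, hB, by omega⟩
    have h1 : c i q = c (i+1) z := by tauto
    rcases hd with (hd | hd) | ⟨-, hd, -⟩
    · exact absurd ⟨hz, h1.symm⟩ (hd z)
    · exact absurd he (Nat.not_even_iff_odd.2 hd.1)
    · exact EF_cons hz (ih (hd he z ⟨hz, h1.symm⟩) (h1 ▸ he) (h1 ▸ hle))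

include hc in
theorem odd_reach (hfin : ∀ i q, ∃ t, DD E B c t i q) {m : ℕ} (hm : Odd m) (t : ℕ) :
    ∀ {i q}, DD E B c t i q → Odd (c i q) →
    m + 1 ≤ c i q → EF E (fun i q => B q ∧ m ≤ c i q) i q := by
  have res : ∀ {i q}, Rs (E i) B (c i) (c (i+1)) q → Odd (c i q) →
      m + 1 ≤ c i q → EF E (fun i q => B q ∧ m ≤ c i q) i q := by
    intro i q hR ho hle
    have hmm := hm
    have hoo := ho
    rw [Nat.odd_iff] at hmm hoo
    rcases hR with h | ⟨-, h | h | ⟨z, hz, h⟩⟩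
    · obtain ⟨z, hz, h'⟩ := P2 (N := N) (E := E i) (B := B) (c := c (i+1)) (q := q)
        (by rw [← hc i]; omega)
      rw [← hc i] at h'
      rcases h' with h' | ⟨-, h1, h2⟩
      · exact absurd ⟨hz, h'.symm⟩ (h z)
      · rw [Nat.odd_iff] at h1
        omega
    · omega
    · exact ⟨0, h, by omega⟩
    · obtain ⟨t, ht⟩ := hfin (i+1) z
      exact EF_cons hz (even_reach hc hm t ht (by rw [Nat.even_iff]; omega) (by omega))
  induction t with
  | zero => intro i q hd; exact res hd
  | succ t ih =>
    intro i q hd ho hle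
    rcases hd with hd | ⟨-, -, hd⟩
    · exact res hd ho hle
    · obtain ⟨z, ⟨hz, h1⟩, hd⟩ := hd (Nat.not_even_iff_odd.2 ho)
      exact EF_cons hz (ih hd (h1 ▸ ho) (h1 ▸ hle))

include hN hc in
theorem claim_G (hfin : ∀ i q, ∃ t, DD E B c t i q) (m : ℕ) (hm : m ≤ N) :
    ∀ i q, m ≤ c i q ↔ G E B m i q := by
  induction m with
  | zero => intro i q; simp [G]
  | succ m ih =>
    have ih := ih (by omega)
    intro i q
    by_cases he : Even m
    · rw [G_even he]
      constructor
      · intro h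
        refine ⟨fun j z => m + 1 ≤ c j z, h, ?_⟩
        intro j z hz
        refine ⟨(ih j z).1 (by omega), ?_⟩
        obtain ⟨w, hw, h'⟩ := P2 (N := N) (E := E j) (B := B) (c := c (j+1)) (q := z)
          (by rw [← hc j]; omega)
        rw [← hc j] at h'
        refine ⟨w, hw, ?_⟩
        rcases h' with h' | ⟨-, h1, h2⟩
        · omega
        · rw [Nat.odd_iff] at h1
          rw [Nat.even_iff] at he
          omega
      · rintro ⟨Y, hq, hY⟩
        have key : ∀ t j z, DD E B c t j z → Y j z → c j z = m → False := by
          intro t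
          induction t with
          | zero =>
            intro j z hd hz hcz
            obtain ⟨-, w, hw, hYw⟩ := hY j z hz
            have h1 := (ih _ _).2 (hY _ _ hYw).1
            have h2 := P1 (N := N) (B := B) (c := c (j+1)) hw
            rw [← hc j] at h2
            rcases hd with hd | hd
            · exact hd w ⟨hw, by omega⟩
            · exact absurd hd.1 (Nat.not_odd_iff_even.2 (hcz ▸ he))
          | succ t iht =>
            intro j z hd hz hcz
            obtain ⟨-, w, hw, hYw⟩ := hY j z hz
            have h1 := (ih _ _).2 (hY _ _ hYw).1
            have h2 := P1 (N := N) (B := B) (c := c (j+1)) hw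
            rw [← hc j] at h2
            rcases hd with (hd | hd) | ⟨-, hd, -⟩
            · exact hd w ⟨hw, by omega⟩
            · exact absurd hd.1 (Nat.not_odd_iff_even.2 (hcz ▸ he))
            · exact iht _ w (hd (show Even (c j z) from hcz ▸ he) w ⟨hw, by omega⟩) hYw (by omega)
        obtain ⟨t, ht⟩ := hfin i q
        have h1 := (ih _ _).2 (hY _ _ hq).1
        have h2 : c i q ≠ m := key t i q ht hq
        omega
    · rw [G_odd he]
      have ho := Nat.not_even_iff_odd.1 he
      simp only [← ih]
      constructor
      · intro h
        obtain ⟨t, ht⟩ := hfin i q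
        rcases Nat.even_or_odd (c i q) with h' | h'
        · exact even_reach hc ho t ht h' h
        · exact odd_reach hc hfin ho t ht h' h
      · intro h
        refine EF_pred_closed (Y := fun i q => m + 1 ≤ c i q) ?_ ?_ h
        · rintro j z ⟨hB, hz⟩
          by_contra hcon
          have h1 : c j z = m := by omega
          have h2 := P3 (N := N) (E := E j) (c := c (j+1)) hB (by rw [← hc j, h1]; exact ho)
          rw [← hc j] at h2
          omega
        · intro j z w hw hle
          have h2 := P1 (N := N) (B := B) (c := c (j+1)) hw
          rw [← hc j] at h2
          omega

end claim

section canon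
variable (hN : Odd N) (hb : ∀ i q, c i q ≤ N)
  (hG : ∀ m, m ≤ N → ∀ i q, m ≤ c i q ↔ G E B m i q)
include hb hG

theorem canon_step (i) : c i = rs N (E i) B (c (i+1)) := by
  funext q
  have hM : mx (E i) (c (i+1)) q ≤ c i q := by
    apply Finset.sup_le
    intro z hz
    rw [hG _ (hb _ _)]
    exact G_pred _ (by simpa using hz) ((hG _ (hb _ _) _ _).1 le_rfl)
  have succG : ∀ m, m ≤ N → ∀ w, E i q w → G E B m (i+1) w → m ≤ mx (E i) (c (i+1)) q := by
    intro m hm w hw h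
    exact ((hG m hm _ _).2 h).trans (le_mx hw)
  have hbq := hb i q
  by_cases hk : c i q ≤ mx (E i) (c (i+1)) q
  · have heq : c i q = mx (E i) (c (i+1)) q := le_antisymm hk hM
    rw [rs, if_neg, heq]
    rintro ⟨hB, ho, hlt⟩
    have : mx (E i) (c (i+1)) q + 1 ≤ c i q := by
      rw [hG _ (by omega), G_odd (Nat.not_even_iff_odd.2 ho)]
      exact ⟨0, hB, (hG _ (by omega) _ _).1 hM⟩
    omega
  · obtain ⟨m, hm⟩ : ∃ m, c i q = m + 1 := ⟨c i q - 1, by omega⟩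
    have hg : G E B (m+1) i q := (hG _ (by omega) _ _).1 (by omega)
    by_cases he : Even m
    · exfalso
      have hg' := hg
      rw [G_even he] at hg'
      obtain ⟨-, w, hw, h⟩ := EG_step hg'
      rw [← G_even he] at h
      have := succG (m+1) (by omega) w hw h
      omega
    · have hg' := hg
      rw [G_odd he] at hg'
      obtain ⟨t, ht⟩ := hg'
      cases t with
      | succ t =>
        exfalso
        obtain ⟨w, hw, h⟩ := ht
        have := succG (m+1) (by omega) w hw (by rw [G_odd he]; exact ⟨t, h⟩)
        omega
      | zero =>
        obtain ⟨hB, hgm⟩ := ht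
        have ho := Nat.not_even_iff_odd.1 he
        obtain ⟨k, rfl⟩ := ho
        rw [G_even (by simp)] at hgm
        obtain ⟨-, w, hw, h⟩ := EG_step hgm
        rw [← G_even (by simp)] at h
        have h1 := succG _ (by omega) w hw h
        have h2 : mx (E i) (c (i+1)) q = 2*k+1 := by omega
        rw [rs, if_pos ⟨hB, by rw [h2]; simp, by omega⟩]
        omega

include hN in
theorem canon_fin (i q) : ∃ t, DD E B c t i q := by
  rcases Nat.even_or_odd (c i q) with he | ho
  · by_contra hcon
    push Not at hcon
    have hlt : c i q + 1 ≤ N := by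
      have := hb i q
      rw [Nat.odd_iff] at hN
      rw [Nat.even_iff] at he
      omega
    have : c i q + 1 ≤ c i q := by
      rw [hG _ hlt, G_even he]
      refine ⟨fun j z => c j z = c i q ∧ ∀ t, ¬ DD E B c t j z, ⟨rfl, hcon⟩, ?_⟩
      rintro j z ⟨h1, h2⟩
      refine ⟨(hG _ (by omega) _ _).1 (by omega), ?_⟩
      by_contra hn
      push Not at hn
      have hfin : ∀ w, ∃ t, Sc (E j) (c j) (c (j+1)) z w → DD E B c t (j+1) w := by
        intro w
        by_cases hS : Sc (E j) (c j) (c (j+1)) z w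
        · by_contra hcw
          push Not at hcw
          obtain ⟨t, ht⟩ := hn w hS.1 (hS.2.trans h1)
          exact (hcw t).2 ht
        · exact ⟨0, fun h => absurd h hS⟩
      choose t ht using hfin
      apply h2 (Finset.univ.sup t + 1)
      refine Or.inr ⟨Rs_S j z (h2 0), fun _ w hw =>
        D_mono (Finset.le_sup (f := t) (Finset.mem_univ w)) (ht w hw), fun hm => ?_⟩
      exact absurd (show Even (c j z) from h1 ▸ he) hm
    omega
  · by_cases h1 : c i q = 1
    · exact ⟨0, Or.inr ⟨ho, Or.inl h1⟩⟩
    obtain ⟨l, hl⟩ : ∃ l, c i q = 2*l+1+1+1 := by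
      obtain ⟨k, hk⟩ := ho
      exact ⟨k-1, by omega⟩
    have hbq := hb i q
    have hg : G E B (2*l+1+1) i q := (hG _ (by omega) _ _).1 (by omega)
    have hodd : ¬ Even (2*l+1) := by simp
    rw [G_odd hodd] at hg
    obtain ⟨t, ht⟩ := hg
    refine ⟨t, ?_⟩
    clear hbq h1
    induction t generalizing i q with
    | zero => exact Or.inr ⟨ho, Or.inr (Or.inl ht.1)⟩
    | succ t ih =>
      obtain ⟨w, hw, h⟩ := ht
      have hbq := hb i q
      have hgw : 2*l+1+1 ≤ c (i+1) w := by
        rw [hG _ (by omega), G_odd hodd]; exact ⟨t, h⟩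
      have hle := P1 (N := N) (B := B) (c := c (i+1)) hw
      rw [← canon_step hb hG i] at hle
      by_cases hcw : c (i+1) w = 2*l+1+1
      · exact Or.inl (Or.inr ⟨ho, Or.inr (Or.inr ⟨w, hw, by omega⟩)⟩)
      · have heq : c (i+1) w = c i q := by omega
        have := ih (i+1) w (heq ▸ ho) (by omega) h
        exact Or.inr ⟨⟨w, hw, heq⟩, fun hm => absurd hm (Nat.not_even_iff_odd.2 ho),
          fun _ => ⟨w, ⟨hw, heq⟩, this⟩⟩

end canon

theorem canon_exists (hN : Odd N) (E : ℕ → Q → Q → Prop) (B : Q → Prop) : ∃ c : ℕ → Q → ℕ,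
    (∀ i q, c i q ≤ N) ∧ (∀ i, c i = rs N (E i) B (c (i+1))) ∧ ∀ i q, ∃ t, DD E B c t i q := by
  let c : ℕ → Q → ℕ := fun i q => Nat.findGreatest (fun m => G E B m i q) N
  have hb : ∀ i q, c i q ≤ N := fun i q => Nat.findGreatest_le N
  have hG : ∀ m, m ≤ N → ∀ i q, m ≤ c i q ↔ G E B m i q := by
    intro m hm i q
    constructor
    · intro h
      refine G_anti h (Nat.findGreatest_spec (P := fun m => G E B m i q) (Nat.zero_le N) ?_)
      simp [G]
    · exact fun h => Nat.le_findGreatest hm h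
  exact ⟨c, hb, canon_step hb hG, canon_fin hN hb hG⟩

end rank

section final
variable {A Q : Type} [Fintype Q]

abbrev PP (Q : Type) [Fintype Q] := Q → Fin (2 * Fintype.card Q + 1 + 1) × Fin (Fintype.card Q)

def cOf (p : PP Q) (q : Q) : ℕ := (p q).1.1
def eOf (p : PP Q) (q : Q) : ℕ := (p q).2.1

theorem cOf_le (p : PP Q) (q : Q) : cOf p q ≤ 2 * Fintype.card Q + 1 := by
  have := (p q).1.2
  unfold cOf
  omega

noncomputable def step (E : Q → Q → Prop) (B : Q → Prop) (p : PP Q) : PP Q := fun q =>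
  (⟨rs (2 * Fintype.card Q + 1) E B (cOf p) q, Nat.lt_succ_of_le (rs_le (cOf_le p) q)⟩,
   ⟨norm (raw (Rs E B (rs (2 * Fintype.card Q + 1) E B (cOf p)) (cOf p))
      (Sc E (rs (2 * Fintype.card Q + 1) E B (cOf p)) (cOf p))
      (Md (rs (2 * Fintype.card Q + 1) E B (cOf p))) (eOf p)) q, norm_lt _ q⟩)

theorem step_iff (E : Q → Q → Prop) (B : Q → Prop) (p p' : PP Q) : p = step E B p' ↔
    cOf p = rs (2 * Fintype.card Q + 1) E B (cOf p') ∧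
    eOf p = norm (raw (Rs E B (cOf p) (cOf p')) (Sc E (cOf p) (cOf p')) (Md (cOf p)) (eOf p')) := by
  constructor
  · rintro rfl
    exact ⟨rfl, rfl⟩
  · rintro ⟨h1, h2⟩
    rw [h1] at h2
    funext q
    apply Prod.ext
    · exact Fin.ext (congrFun h1 q)
    · exact Fin.ext (congrFun h2 q)

theorem pp_ext {p p' : PP Q} (h1 : cOf p = cOf p') (h2 : eOf p = eOf p') : p = p' := by
  funext q
  exact Prod.ext (Fin.ext (congrFun h1 q)) (Fin.ext (congrFun h2 q))

end final
end BD

/-- there is a constant `C > 0` such that every nondeterministic Büchi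
automaton with `n ≥ 1` states has an equivalent backward deterministic automaton with a
generalized transition Büchi condition and at most `C * (2n(n+1))^n` states. -/
theorem buechi_to_backward_deterministic_via_muTL :
    ∃ C : ℕ, 0 < C ∧
      ∀ (A Q : Type) [Fintype Q], 1 ≤ Fintype.card Q →
        ∀ (Δ : Set (Q × A × Q)) (B : Set Q) (I : Set Q),
          ∃ (P : Type) (_ : Fintype P) (ρ : A → P → P) (k : ℕ)
            (T : Fin k → Set (P × A × P)) (I' : Set P),
            Fintype.card P ≤
              C * (2 * Fintype.card Q * (Fintype.card Q + 1)) ^ Fintype.card Q ∧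
            (∀ u : ℕ → A, ∃! r : ℕ → P, IsBackRun ρ u r ∧ GTBFinal T u r) ∧
            (∀ (u : ℕ → A) (r : ℕ → P), IsBackRun ρ u r → GTBFinal T u r →
              (r 0 ∈ I' ↔ ∃ q ∈ I, NBAAccepts Δ B u q)) := by
  classical
  refine ⟨1, one_pos, ?_⟩
  intro A Q _ _ Δ B I
  let F : A → Q → Q → Prop := fun a q z => (q, a, z) ∈ Δ
  let b : Q → Prop := fun q => q ∈ B
  have hN : Odd (2 * Fintype.card Q + 1) := by simp
  let T : Fin 1 → Set (BD.PP Q × A × BD.PP Q) := fun _ => {x | ∀ q, ∃ z,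
    BD.raw (BD.Rs (F x.2.1) b (BD.cOf x.1) (BD.cOf x.2.2))
      (BD.Sc (F x.2.1) (BD.cOf x.1) (BD.cOf x.2.2)) (BD.Md (BD.cOf x.1)) (BD.eOf x.2.2) q
      ≤ BD.eOf x.2.2 z}
  have run : ∀ (u : ℕ → A) (r : ℕ → BD.PP Q),
      IsBackRun (fun a p => BD.step (F a) b p) u r → GTBFinal T u r →
      ∀ i q, ∃ t, BD.DD (fun i => F (u i)) b (fun i => BD.cOf (r i)) t i q := by
    intro u r h1 h2
    have h1' := fun i => (BD.step_iff _ _ _ _).1 (h1 i)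
    exact BD.lemFin (e := fun i => BD.eOf (r i)) (fun i => (h1' i).2)
      (fun i q h => BD.Rs_S (E := fun i => F (u i)) (B := b) (c := fun i => BD.cOf (r i)) i q h)
      (h2 0)
  have rank : ∀ (u : ℕ → A) (r : ℕ → BD.PP Q),
      IsBackRun (fun a p => BD.step (F a) b p) u r → GTBFinal T u r →
      ∀ m, m ≤ 2 * Fintype.card Q + 1 → ∀ i q,
        m ≤ BD.cOf (r i) q ↔ BD.G (fun i => F (u i)) b m i q := by
    intro u r h1 h2
    have h1' := fun i => (BD.step_iff _ _ _ _).1 (h1 i)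
    exact BD.claim_G (c := fun i => BD.cOf (r i)) hN (fun i => (h1' i).1) (run u r h1 h2)
  refine ⟨BD.PP Q, inferInstance, fun a p => BD.step (F a) b p, 1, T,
    {p | ∃ q ∈ I, BD.cOf p q = 2 * Fintype.card Q + 1}, ?_, ?_, ?_⟩
  · apply le_of_eq
    simp only [Fintype.card_fun, Fintype.card_prod, Fintype.card_fin, one_mul]
    congr 1
    ring
  · intro u
    obtain ⟨c, hc1, hc2, hc3⟩ := BD.canon_exists hN (fun i => F (u i)) b
    obtain ⟨e, he1, he2, he3⟩ := BD.e_exists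
      (fun i q h => BD.Rs_S (E := fun i => F (u i)) (B := b) (c := c) i q h) hc3
    refine ⟨fun i q => (⟨c i q, Nat.lt_succ_of_le (hc1 i q)⟩, ⟨e i q, he1 i q⟩), ⟨?_, ?_⟩, ?_⟩
    · intro i
      rw [BD.step_iff]
      exact ⟨hc2 i, he2 i⟩
    · intro _
      exact he3
    · rintro r ⟨h1, h2⟩
      have h1' := fun i => (BD.step_iff _ _ _ _).1 (h1 i)
      have hG := rank u r h1 h2
      have hG' := BD.claim_G hN hc2 hc3
      have hcc : (fun i => BD.cOf (r i)) = c := by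
        funext i q
        apply le_antisymm
        · rw [hG' _ (BD.cOf_le _ _), ← hG _ (BD.cOf_le _ _)]
        · rw [hG _ (hc1 _ _), ← hG' _ (hc1 _ _)]
      subst hcc
      have hee : (fun i => BD.eOf (r i)) = e := BD.e_unique (fun i => (h1' i).2) he2
        (fun i q h => BD.Rs_S (E := fun i => F (u i)) (B := b)
          (c := fun i => BD.cOf (r i)) i q h) hc3
      subst hee
      rfl
  · intro u r h1 h2
    have hG := rank u r h1 h2 _ le_rfl 0
    have key : ∀ q, BD.cOf (r 0) q = 2 * Fintype.card Q + 1 ↔ NBAAccepts Δ B u q := by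
      intro q
      have h3 : BD.cOf (r 0) q = 2 * Fintype.card Q + 1 ↔
          2 * Fintype.card Q + 1 ≤ BD.cOf (r 0) q := by
        have := BD.cOf_le (r 0) q
        omega
      rw [h3, hG]
      have h4 : BD.Acc (fun i => F (u i)) b 0 q ↔ NBAAccepts Δ B u q := by
        simp only [BD.Acc, NBAAccepts, Nat.zero_le, true_implies, F, b]
      rw [← h4]
      exact ⟨BD.G_top_acc, BD.Acc_G _⟩
    simp only [Set.mem_ofPred_eq, key]
end

section
/- Every ω-language recognized by a nondeterministic Büchi automaton is recognized by a backward deterministic automaton with a state-based Büchi recurrence condition (augmented with a suitable set of initial states). -/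
/-- A run is final for the state-based Büchi condition `Ω` if it visits `Ω` infinitely
often. -/
def SBFinal {P : Type*} (Ω : Set P) (r : ℕ → P) : Prop :=
  ∀ m, ∃ i, m ≤ i ∧ r i ∈ Ω


universe u v w

/-- Final run with transition-based Büchi events. -/
def BFinal {P : Type u} {A : Type v} (ρ : A → P → P) (E : A → P → Prop) (x : ℕ → A)
    (r : ℕ → P) : Prop :=
  (∀ i, r i = ρ (x i) (r (i + 1))) ∧ ∀ m, ∃ i, m ≤ i ∧ E (x i) (r (i + 1))

/-- A labelling of positions computed by a backward deterministic automaton. -/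
def BRec {A : Type v} {T : Type w} (F : (ℕ → A) → ℕ → T) : Prop :=
  ∃ (P : Type u) (_ : Finite P) (ρ : A → P → P) (E : A → P → Prop) (out : P → T),
    (∀ x, ∃ r, BFinal ρ E x r) ∧
    (∀ x r r', BFinal ρ E x r → BFinal ρ E x r' → r = r') ∧
    (∀ x r, BFinal ρ E x r → ∀ i, out (r i) = F x i)

theorem brec_map {A : Type v} {T T' : Type w} {F : (ℕ → A) → ℕ → T} (h : BRec.{u} F)
    (g : T → T') : BRec.{u} (fun x i => g (F x i)) := by
  obtain ⟨P, hP, ρ, E, out, h1, h2, h3⟩ := h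
  exact ⟨P, hP, ρ, E, fun p => g (out p), h1, h2, fun x r hr i => congrArg g (h3 x r hr i)⟩

theorem brec_const {A : Type v} {T : Type w} (t : T) :
    BRec.{u} (fun (_ : ℕ → A) (_ : ℕ) => t) :=
  ⟨PUnit, inferInstance, fun _ _ => PUnit.unit, fun _ _ => True, fun _ => t,
    fun _ => ⟨fun _ => PUnit.unit, fun _ => rfl, fun m => ⟨m, le_rfl, trivial⟩⟩,
    fun _ _ _ _ _ => funext fun _ => rfl, fun _ _ _ _ => rfl⟩

theorem cnt_exists (e1 e2 : ℕ → Prop) (h1 : ∀ m, ∃ i, m ≤ i ∧ e1 i)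
    (h2 : ∀ m, ∃ i, m ≤ i ∧ e2 i) :
    ∃ c : ℕ → Prop, (∀ i, c i ↔ (e2 i ∨ (¬ e1 i ∧ c (i + 1)))) ∧
      ∀ m, ∃ i, m ≤ i ∧ (e2 i ∧ (e1 i ∨ ¬ c (i + 1))) := by
  refine ⟨fun i => ∃ j, i ≤ j ∧ e2 j ∧ ∀ k, i ≤ k → k < j → ¬ e1 k, ?_, ?_⟩
  · intro i
    constructor
    · rintro ⟨j, hij, hj, hk⟩
      rcases hij.eq_or_lt with rfl | hlt
      · exact Or.inl hj
      · exact Or.inr ⟨hk i le_rfl hlt, j, hlt, hj, fun k h h' => hk k (by omega) h'⟩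
    · rintro (h | ⟨h, j, hij, hj, hk⟩)
      · exact ⟨i, le_rfl, h, fun k _ _ => by omega⟩
      · refine ⟨j, by omega, hj, fun k h1 h2 => ?_⟩
        rcases h1.eq_or_lt with rfl | hlt
        · exact h
        · exact hk k hlt h2
  · intro m
    obtain ⟨i, hi, hei⟩ := h2 m
    obtain ⟨k, hk, hek⟩ := h1 i
    -- largest j in [i,k] with e2 j
    classical
    have hex : ∃ d, d ≤ k - i ∧ e2 (k - d) := ⟨k - i, le_rfl, by
      rwa [Nat.sub_sub_self hk]⟩
    obtain ⟨hd, hd2⟩ := Nat.find_spec hex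
    have hmin := fun d => Nat.find_min hex (m := d)
    set d := Nat.find hex
    refine ⟨k - d, by omega, hd2, ?_⟩
    by_cases hd0 : d = 0
    · left; rw [hd0]; exact hek
    · right
      rintro ⟨j, hj1, hj2, hj3⟩
      by_cases hjk : j ≤ k
      · refine hmin (k - j) (by omega) ⟨by omega, ?_⟩
        rwa [Nat.sub_sub_self hjk]
      · exact hj3 k (by omega) (by omega) hek

theorem cnt_unique (e1 e2 : ℕ → Prop)
    (h2 : ∀ m, ∃ i, m ≤ i ∧ e2 i) (c c' : ℕ → Prop)
    (hc : ∀ i, c i ↔ (e2 i ∨ (¬ e1 i ∧ c (i + 1))))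
    (hc' : ∀ i, c' i ↔ (e2 i ∨ (¬ e1 i ∧ c' (i + 1)))) : c = c' := by
  have key : ∀ d i, e2 (i + d) → (c i ↔ c' i) := by
    intro d
    induction d with
    | zero => intro i h; rw [hc, hc']; simp at h; simp [h]
    | succ d ih =>
      intro i h
      rw [hc, hc', ih (i + 1) (by rwa [show i + 1 + d = i + (d + 1) by omega])]
  funext i
  obtain ⟨j, hj, hej⟩ := h2 i
  exact propext (key (j - i) i (by rwa [Nat.add_sub_cancel' hj]))

theorem cnt_inf (e1 e2 : ℕ → Prop) (c : ℕ → Prop)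
    (hc : ∀ i, c i ↔ (e2 i ∨ (¬ e1 i ∧ c (i + 1))))
    (h : ∀ m, ∃ i, m ≤ i ∧ (e2 i ∧ (e1 i ∨ ¬ c (i + 1)))) :
    ∀ m, ∃ i, m ≤ i ∧ e1 i := by
  intro m
  by_contra hno
  push Not at hno
  obtain ⟨i, hi, _, hi3⟩ := h m
  have hi4 : ¬ c (i + 1) := by
    rcases hi3 with h | h
    · exact absurd h (hno i hi)
    · exact h
  obtain ⟨j, hj, hj2, _⟩ := h (i + 1)
  have key : ∀ d k, m ≤ k → c (k + d) → c k := by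
    intro d
    induction d with
    | zero => intro k _ h; exact h
    | succ d ih =>
      intro k hk h
      rw [hc]
      exact Or.inr ⟨hno k hk, ih (k + 1) (by omega) (by rwa [show k + 1 + d = k + (d + 1) by omega])⟩
  apply hi4
  apply key (j - (i + 1)) (i + 1) (by omega)
  rw [Nat.add_sub_cancel' hj, hc]
  exact Or.inl hj2

theorem brec_cascade {A : Type v} {T : Type w} {T' : Type w} {F : (ℕ → A) → ℕ → T}
    {G : (ℕ → A × T) → ℕ → T'} (hF : BRec.{u} F) (hG : BRec.{u} G) :
    BRec.{u} (fun x i => G (fun k => (x k, F x k)) i) := by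
  obtain ⟨P, hP, ρ, E, out, h1, h2, h3⟩ := hF
  obtain ⟨P', hP', ρ', E', out', h1', h2', h3'⟩ := hG
  let e1 : A → P × P' × Prop → Prop := fun a p => E a p.1
  let e2 : A → P × P' × Prop → Prop := fun a p => E' (a, out (ρ a p.1)) p.2.1
  have proj : ∀ x (r : ℕ → P × P' × Prop), BFinal
      (fun a p => (ρ a p.1, ρ' (a, out (ρ a p.1)) p.2.1, (e2 a p ∨ (¬ e1 a p ∧ p.2.2))))
      (fun a p => e2 a p ∧ (e1 a p ∨ ¬ p.2.2)) x r →
      BFinal ρ E x (fun i => (r i).1) ∧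
      BFinal ρ' E' (fun k => (x k, F x k)) (fun i => (r i).2.1) ∧
      (∀ i, (r i).2.2 ↔ (e2 (x i) (r (i+1)) ∨ (¬ e1 (x i) (r (i+1)) ∧ (r (i+1)).2.2))) ∧
      (∀ m, ∃ i, m ≤ i ∧ e2 (x i) (r (i+1))) := by
    rintro x r ⟨hr, hi⟩
    have hc : ∀ i, (r i).2.2 ↔
        (e2 (x i) (r (i+1)) ∨ (¬ e1 (x i) (r (i+1)) ∧ (r (i+1)).2.2)) := by
      intro i
      conv_lhs => rw [hr i]
    have hA : BFinal ρ E x (fun i => (r i).1) := by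
      refine ⟨fun i => ?_, ?_⟩
      · simpa using congrArg Prod.fst (hr i)
      · exact cnt_inf (fun i => e1 (x i) (r (i+1))) (fun i => e2 (x i) (r (i+1)))
          (fun i => (r i).2.2) hc hi
    have ho : ∀ i, out (ρ (x i) (r (i+1)).1) = F x i := by
      intro i
      rw [← h3 x _ hA i]
      exact congrArg out (hA.1 i).symm
    have he2 : ∀ m, ∃ i, m ≤ i ∧ e2 (x i) (r (i+1)) := fun m =>
      let ⟨i, hi, h, _⟩ := hi m
      ⟨i, hi, h⟩
    refine ⟨hA, ⟨fun i => ?_, fun m => ?_⟩, hc, he2⟩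
    · have := congrArg (fun p => p.2.1) (hr i)
      simp only [ho] at this
      exact this
    · obtain ⟨i, hi, h⟩ := he2 m
      refine ⟨i, hi, ?_⟩
      simp only [e2, ho] at h
      exact h
  refine ⟨P × P' × Prop, inferInstance,
    (fun a p => (ρ a p.1, ρ' (a, out (ρ a p.1)) p.2.1, (e2 a p ∨ (¬ e1 a p ∧ p.2.2)))),
    (fun a p => e2 a p ∧ (e1 a p ∨ ¬ p.2.2)), fun p => out' p.2.1, ?_, ?_, ?_⟩
  · intro x
    obtain ⟨r, hr⟩ := h1 x
    obtain ⟨r', hr'⟩ := h1' (fun k => (x k, F x k))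
    have ho : ∀ i, out (ρ (x i) (r (i+1))) = F x i := by
      intro i
      rw [← h3 x _ hr i, ← hr.1 i]
    obtain ⟨c, hc, hc'⟩ := cnt_exists _ _ hr.2 hr'.2
    refine ⟨fun i => (r i, r' i, c i), fun i => ?_, ?_⟩
    · simp only [e1, e2, ho]
      rw [← hr.1 i, ← hr'.1 i, ← hc i]
    · simp only [e1, e2, ho]
      exact hc'
  · intro x r r' hr hr'
    obtain ⟨a1, a2, a3, a4⟩ := proj x r hr
    obtain ⟨b1, b2, b3, b4⟩ := proj x r' hr'
    have c1 := h2 _ _ _ a1 b1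
    have c2 := h2' _ _ _ a2 b2
    have c1' : ∀ i, (r i).1 = (r' i).1 := fun i => congrFun c1 i
    have c2' : ∀ i, (r i).2.1 = (r' i).2.1 := fun i => congrFun c2 i
    have c3 := cnt_unique (fun i => e1 (x i) (r (i+1))) (fun i => e2 (x i) (r (i+1))) a4
      (fun i => (r i).2.2) (fun i => (r' i).2.2) a3 (by
        intro i
        have := b3 i
        simp only [e1, e2, ← c1', ← c2'] at this ⊢
        exact this)
    funext i
    exact Prod.ext (c1' i) (Prod.ext (c2' i) (congrFun c3 i))
  · intro x r hr i
    exact h3' _ _ (proj x r hr).2.1 i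

/-- Finite approximations of the least fixed point. -/
def approx {A : Type v} {L : Type u} [CompleteLattice L] (s : A → L → L) (x : ℕ → A) :
    ℕ → ℕ → L
  | 0, _ => ⊥
  | k + 1, i => s (x i) (approx s x k (i + 1))

section lfp
variable {A : Type v} {L : Type u} [CompleteLattice L] (s : A → L → L)

theorem approx_mono (hs : ∀ a, Monotone (s a)) (x : ℕ → A) (i : ℕ) :
    Monotone (fun k => approx s x k i) := by
  apply monotone_nat_of_le_succ
  intro k
  induction k generalizing i with
  | zero => exact bot_le
  | succ k ih => exact hs _ (ih (i + 1))

theorem approx_stab [Finite L] (hs : ∀ a, Monotone (s a)) (x : ℕ → A) (i : ℕ) :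
    ∃ K, (⨆ k, approx s x k i) = approx s x K i := by
  obtain ⟨K, hK⟩ := WellFoundedGT.monotone_chain_condition
    (⟨fun k => approx s x k i, approx_mono s hs x i⟩ : ℕ →o L)
  refine ⟨K, le_antisymm (iSup_le fun k => ?_) (le_iSup (fun k => approx s x k i) K)⟩
  rcases le_total k K with h | h
  · exact approx_mono s hs x i h
  · exact (hK k h).ge

theorem approx_pre [Finite L] (hs : ∀ a, Monotone (s a)) (x : ℕ → A) (i : ℕ) :
    s (x i) (⨆ k, approx s x k (i + 1)) ≤ ⨆ k, approx s x k i := by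
  obtain ⟨K, hK⟩ := approx_stab s hs x (i + 1)
  rw [hK]
  exact le_iSup (fun k => approx s x k i) (K + 1)

theorem brec_lfp [Finite L] (hs : ∀ a, Monotone (s a)) :
    BRec.{u} (fun (x : ℕ → A) i => ⨆ k, approx s x k i) := by
  let ρ : A → Set L → Set L := fun a C => insert ⊥ (s a '' C)
  let E : A → Set L → Prop := fun a C => ∃ t, IsGreatest C t ∧ s a t ∈ insert ⊥ (s a '' (C \ {t}))
  let R : (ℕ → A) → ℕ → Set L := fun x i => Set.range (fun k => approx s x k i)
  have hRtop : ∀ x i, IsGreatest (R x i) (⨆ k, approx s x k i) := by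
    intro x i
    obtain ⟨K, hK⟩ := approx_stab s hs x i
    refine ⟨⟨K, hK.symm⟩, ?_⟩
    rintro _ ⟨k, rfl⟩
    exact le_iSup (fun k => approx s x k i) k
  have hRrun : ∀ x i, R x i = ρ (x i) (R x (i + 1)) := by
    intro x i
    ext y
    constructor
    · rintro ⟨k, rfl⟩
      cases k with
      | zero => exact Or.inl rfl
      | succ k => exact Or.inr ⟨_, ⟨k, rfl⟩, rfl⟩
    · rintro (rfl | ⟨_, ⟨k, rfl⟩, rfl⟩)
      · exact ⟨0, rfl⟩
      · exact ⟨k + 1, rfl⟩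
  have hRfin : ∀ x, BFinal ρ E x (R x) := by
    intro x
    refine ⟨hRrun x, ?_⟩
    by_contra hno
    push Not at hno
    obtain ⟨m, hm⟩ := hno
    set Y : ℕ → L := fun i => ⨆ k, approx s x k i with hY
    have hnE : ∀ i, m ≤ i → s (x i) (Y (i+1)) ∉
        insert ⊥ (s (x i) '' (R x (i+1) \ {Y (i+1)})) := by
      intro i hi h
      exact hm i hi ⟨Y (i+1), hRtop x (i+1), h⟩
    have hYs : ∀ i, s (x i) (Y (i+1)) = Y i := by
      intro i
      apply le_antisymm (approx_pre s hs x i)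
      apply iSup_le
      intro k
      cases k with
      | zero => exact bot_le
      | succ k => exact hs _ (le_iSup (fun k => approx s x k (i+1)) k)
    have hYb : ∀ i, m ≤ i → Y i ≠ ⊥ := by
      intro i hi h
      apply hnE i hi
      rw [hYs, h]
      exact Or.inl rfl
    have key : ∀ k i, m ≤ i → approx s x k i ≠ Y i := by
      intro k
      induction k with
      | zero => intro i hi h; exact hYb i hi h.symm
      | succ k ih =>
        intro i hi h
        apply hnE i hi
        rw [hYs]
        exact Or.inr ⟨approx s x k (i+1), ⟨⟨k, rfl⟩, ih (i+1) (by omega)⟩, h⟩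
    obtain ⟨K, hK⟩ := approx_stab s hs x m
    exact key K m le_rfl hK.symm
  have huniq : ∀ x r, BFinal ρ E x r → r = R x := by
    rintro x r ⟨hr, hE⟩
    have hsub : ∀ i, R x i ⊆ r i := by
      rintro i _ ⟨k, rfl⟩
      induction k generalizing i with
      | zero => show ⊥ ∈ r i; rw [hr i]; exact Or.inl rfl
      | succ k ih => show s _ _ ∈ r i; rw [hr i]; exact Or.inr ⟨_, ih (i+1), rfl⟩
    -- fakes
    let K : ℕ → Set L := fun i => r i \ R x i
    have hback : ∀ i f, f ∈ K i → ∃ g ∈ K (i+1), s (x i) g = f := by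
      rintro i f ⟨hf, hf'⟩
      rw [hr i] at hf
      rcases hf with rfl | ⟨g, hg, rfl⟩
      · exact absurd ⟨0, rfl⟩ hf'
      · refine ⟨g, ⟨hg, fun h => hf' ?_⟩, rfl⟩
        rw [hRrun]
        exact Or.inr ⟨g, h, rfl⟩
    have hge : ∀ k i f, f ∈ K i → approx s x k i ≤ f := by
      intro k
      induction k with
      | zero => intro i f _; exact bot_le
      | succ k ih =>
        intro i f hf
        obtain ⟨g, hg, rfl⟩ := hback i f hf
        exact hs _ (ih _ _ hg)
    have hKsub : ∀ i, K i ⊆ s (x i) '' K (i+1) := fun i f hf => by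
      obtain ⟨g, hg, h⟩ := hback i f hf
      exact ⟨g, hg, h⟩
    have hcard : ∀ i, (K i).ncard ≤ (K (i+1)).ncard := fun i =>
      (Set.ncard_le_ncard (hKsub i) (Set.toFinite _)).trans (Set.ncard_image_le (Set.toFinite _))
    by_contra hne
    have hex : ∃ i, (K i).Nonempty := by
      by_contra h
      push Not at h
      apply hne
      funext i
      exact (Set.sdiff_eq_empty.mp (h i)).antisymm (hsub i)
    obtain ⟨i0, hi0⟩ := hex
    have hmono : Monotone (fun i => (K i).ncard) := monotone_nat_of_le_succ hcard
    have hstab : ∃ m, ∀ i, m ≤ i → (K i).ncard = (K (i+1)).ncard := by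
      by_contra h
      push Not at h
      have : ∀ c, ∃ i, c ≤ (K i).ncard := by
        intro c
        induction c with
        | zero => exact ⟨0, Nat.zero_le _⟩
        | succ c ih =>
          obtain ⟨i, hi⟩ := ih
          obtain ⟨j, hj, hj'⟩ := h i
          have := hmono hj
          have := hcard j
          exact ⟨j+1, by simp only at *; omega⟩
      obtain ⟨i, hi⟩ := this ((Set.univ : Set L).ncard + 1)
      have := Set.ncard_le_ncard (Set.subset_univ (K i)) (Set.toFinite _)
      omega
    obtain ⟨m, hm⟩ := hstab
    obtain ⟨i, hi, t, ht, hst⟩ := hE (max m i0)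
    have him : m ≤ i := le_trans (le_max_left _ _) hi
    have hii : i0 ≤ i := le_trans (le_max_right _ _) hi
    have hKne : (K (i+1)).Nonempty := by
      rw [← Set.ncard_pos (Set.toFinite _)] at hi0 ⊢
      exact lt_of_lt_of_le hi0 (hmono (by omega))
    have htK : t ∈ K (i+1) := by
      refine ⟨ht.1, fun htR => ?_⟩
      obtain ⟨f, hf⟩ := hKne
      have h1 : f ≤ t := ht.2 hf.1
      obtain ⟨k, hk⟩ := htR
      have h2 : t ≤ f := hk ▸ hge k _ f hf
      have : f = t := le_antisymm h1 h2
      exact hf.2 (this ▸ ⟨k, hk⟩)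
    -- image equals K i and injective
    have himg : K i = s (x i) '' K (i+1) :=
      Set.eq_of_subset_of_ncard_le (hKsub i) (by
        rw [hm i him]; exact Set.ncard_image_le (Set.toFinite _)) (Set.toFinite _)
    have hinj : Set.InjOn (s (x i)) (K (i+1)) :=
      Set.injOn_of_ncard_image_eq (by rw [← himg, hm i him]) (Set.toFinite _)
    have hstK : s (x i) t ∈ K i := himg ▸ ⟨t, htK, rfl⟩
    rcases hst with h | ⟨g, ⟨hg, hgt⟩, h⟩
    · exact hstK.2 (h ▸ ⟨0, rfl⟩)
    · by_cases hgR : g ∈ R x (i+1)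
      · apply hstK.2
        rw [hRrun]
        exact Or.inr ⟨g, hgR, h⟩
      · exact hgt (hinj ⟨hg, hgR⟩ htK h)
  refine ⟨Set L, inferInstance, ρ, E, sSup, fun x => ⟨R x, hRfin x⟩, ?_, ?_⟩
  · intro x r r' hr hr'
    rw [huniq x r hr, huniq x r' hr']
  · intro x r hr i
    rw [huniq x r hr]
    rfl

end lfp

section nba
variable {Q : Type u} {A : Type v} (Δ : Set (Q × A × Q)) (B : Set Q)

/-- states that die -/
def stepFin (l : A × Set Q) (Z : Set Q) : Set Q :=
  {q | q ∉ l.2 ∨ ∀ q', (q, l.1, q') ∈ Δ → q' ∈ Z}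

/-- states that reach `B` -/
def stepB (l : A × Set Q) (Z : Set Q) : Set Q :=
  {q | q ∈ l.2 ∧ (q ∈ B ∨ ∃ q', (q, l.1, q') ∈ Δ ∧ q' ∈ Z)}

theorem stepFin_mono (l : A × Set Q) : Monotone (stepFin Δ l) := by
  rintro Z Z' h q (hq | hq)
  · exact Or.inl hq
  · exact Or.inr fun q' h' => h (hq q' h')

theorem stepB_mono (l : A × Set Q) : Monotone (stepB Δ B l) := by
  rintro Z Z' h q ⟨hq, hq' | ⟨q', h1, h2⟩⟩
  · exact ⟨hq, Or.inl hq'⟩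
  · exact ⟨hq, Or.inr ⟨q', h1, h h2⟩⟩

def infPart (x : ℕ → A) (S : ℕ → Set Q) (i : ℕ) : Set Q :=
  (⨆ k, approx (stepFin Δ) (fun k => (x k, S k)) k i)ᶜ

def reachPart (x : ℕ → A) (S : ℕ → Set Q) (i : ℕ) : Set Q :=
  ⨆ k, approx (stepB Δ B) (fun k => (x k, S k)) k i

def level (x : ℕ → A) : ℕ → ℕ → Set Q
  | 0 => fun _ => Set.univ
  | j + 1 => reachPart Δ B x (infPart Δ x (level x j))

def Acc' (x : ℕ → A) (i : ℕ) : Set Q :=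
  {q | ∃ r : ℕ → Q, r i = q ∧ (∀ k, i ≤ k → (r k, x k, r (k + 1)) ∈ Δ) ∧
    ∀ m, ∃ k, m ≤ k ∧ r k ∈ B}

theorem brec_level [Finite Q] (j : ℕ) : BRec.{u} (fun (x : ℕ → A) => level Δ B x j) := by
  induction j with
  | zero => exact brec_const _
  | succ j ih =>
    have h1 := brec_map (brec_cascade ih (brec_lfp (stepFin Δ) (stepFin_mono Δ))) (fun Z => Zᶜ)
    exact brec_cascade h1 (brec_lfp (stepB Δ B) (stepB_mono Δ B))

theorem infPart_sub [Finite Q] (x : ℕ → A) (S : ℕ → Set Q) (i : ℕ) :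
    infPart Δ x S i ⊆ S i := by
  intro q hq
  by_contra h
  apply hq
  exact approx_pre (stepFin Δ) (stepFin_mono Δ) (fun k => (x k, S k)) i (Or.inl h)

theorem infPart_succ [Finite Q] (x : ℕ → A) (S : ℕ → Set Q) (i : ℕ) (q : Q)
    (hq : q ∈ infPart Δ x S i) : ∃ q' ∈ infPart Δ x S (i+1), (q, x i, q') ∈ Δ := by
  by_contra h
  push Not at h
  apply hq
  refine approx_pre (stepFin Δ) (stepFin_mono Δ) (fun k => (x k, S k)) i (Or.inr fun q' hq' => ?_)
  by_contra h'
  exact h q' h' hq'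

theorem acc_infPart (x : ℕ → A) (S : ℕ → Set Q)
    (hS : ∀ i, Acc' Δ B x i ⊆ S i) (i : ℕ) : Acc' Δ B x i ⊆ infPart Δ x S i := by
  have key : ∀ k i q, q ∈ Acc' Δ B x i → q ∉ approx (stepFin Δ) (fun k => (x k, S k)) k i := by
    intro k
    induction k with
    | zero => intro i q _ h; exact h
    | succ k ih =>
      rintro i q hq (h | h)
      · exact h (hS i hq)
      · obtain ⟨r, rfl, h1, h2⟩ := hq
        exact ih (i+1) (r (i+1)) ⟨r, rfl, fun k hk => h1 k (by omega), h2⟩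
          (h _ (h1 i le_rfl))
  intro q hq h
  simp only [Set.iSup_eq_iUnion, Set.mem_iUnion] at h
  obtain ⟨k, hk⟩ := h
  exact key k i q hq hk

theorem acc_reachPart [Finite Q] (x : ℕ → A) (S : ℕ → Set Q)
    (hS : ∀ i, Acc' Δ B x i ⊆ S i) (i : ℕ) : Acc' Δ B x i ⊆ reachPart Δ B x S i := by
  rintro q ⟨r, rfl, h1, h2⟩
  obtain ⟨k, hk, hkB⟩ := h2 i
  obtain ⟨d, rfl⟩ := Nat.exists_eq_add_of_le hk
  clear hk
  induction d generalizing i with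
  | zero =>
    exact approx_pre (stepB Δ B) (stepB_mono Δ B) (fun k => (x k, S k)) i
      ⟨hS i ⟨r, rfl, h1, h2⟩, Or.inl hkB⟩
  | succ d ih =>
    exact approx_pre (stepB Δ B) (stepB_mono Δ B) (fun k => (x k, S k)) i
      ⟨hS i ⟨r, rfl, h1, h2⟩, Or.inr ⟨r (i+1), h1 i le_rfl, ih (i+1)
        (fun k hk => h1 k (by omega)) (by rwa [show i + 1 + d = i + (d + 1) by omega])⟩⟩

theorem reachPart_sub (x : ℕ → A) (S : ℕ → Set Q) (i : ℕ) :
    reachPart Δ B x S i ⊆ S i := by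
  intro q hq
  simp only [reachPart, Set.iSup_eq_iUnion, Set.mem_iUnion] at hq
  obtain ⟨k, hk⟩ := hq
  cases k with
  | zero => exact hk.elim
  | succ k => exact hk.1

theorem acc_level [Finite Q] (x : ℕ → A) (j i : ℕ) : Acc' Δ B x i ⊆ level Δ B x j i := by
  induction j generalizing i with
  | zero => exact fun _ _ => trivial
  | succ j ih => exact acc_reachPart Δ B x _ (acc_infPart Δ B x _ ih) i

theorem full_acc (x : ℕ → A) (X : ℕ → Set Q)
    (hsucc : ∀ i, ∀ q ∈ X i, ∃ q' ∈ X (i+1), (q, x i, q') ∈ Δ)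
    (hXY : ∀ i, X i ⊆ reachPart Δ B x X i) (i : ℕ) : X i ⊆ Acc' Δ B x i := by
  classical
  let D : ℕ → ℕ → Set Q := approx (stepB Δ B) (fun k => (x k, X k))
  have hD : ∀ i q, q ∈ X i → ∃ k, q ∈ D k i := by
    intro i q hq
    have := hXY i hq
    simpa only [reachPart, Set.iSup_eq_iUnion, Set.mem_iUnion] using this
  have hDX : ∀ k i, D k i ⊆ X i := by
    intro k i q h
    cases k with
    | zero => exact h.elim
    | succ k => exact h.1
  have hnext : ∀ i q, ∃ q', q ∈ X i → (q' ∈ X (i+1) ∧ (q, x i, q') ∈ Δ ∧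
      (q ∈ B ∨ ∀ k, q ∈ D k i → (∀ k' < k, q ∉ D k' i) → ∃ k' < k, q' ∈ D k' (i+1))) := by
    intro i q
    by_cases hq : q ∈ X i
    · by_cases hB : q ∈ B
      · obtain ⟨q', h1, h2⟩ := hsucc i q hq
        exact ⟨q', fun _ => ⟨h1, h2, Or.inl hB⟩⟩
      · have h1 := Nat.find_spec (hD i q hq)
        have h2 := fun m => Nat.find_min (hD i q hq) (m := m)
        generalize Nat.find (hD i q hq) = k at h1 h2
        cases k with
        | zero => exact h1.elim
        | succ k =>
          rcases h1.2 with h | ⟨q', h3, h4⟩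
          · exact absurd h hB
          · refine ⟨q', fun _ => ⟨hDX _ _ h4, h3, Or.inr fun k' hk' hmin => ⟨k, ?_, h4⟩⟩⟩
            by_contra hlt
            exact h2 k' (by omega) hk'
    · exact ⟨q, fun h => absurd h hq⟩
  choose next hnext using hnext
  intro q hq
  let g : ℕ → Q := fun n => Nat.rec q (fun n p => next (i + n) p) n
  have hg : ∀ n, g n ∈ X (i + n) := by
    intro n
    induction n with
    | zero => exact hq
    | succ n ih => exact (hnext _ _ ih).1
  have hB : ∀ k n, g n ∈ D k (i + n) → ∃ n', n ≤ n' ∧ g n' ∈ B := by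
    intro k
    induction k using Nat.strong_induction_on with
    | _ k ih =>
      intro n hn
      by_cases hmin : ∀ k' < k, g n ∉ D k' (i + n)
      · rcases (hnext _ _ (hg n)).2.2 with h | h
        · exact ⟨n, le_rfl, h⟩
        · obtain ⟨k', hk', h'⟩ := h k hn hmin
          obtain ⟨n', h1, h2⟩ := ih k' hk' (n+1) h'
          exact ⟨n', by omega, h2⟩
      · push Not at hmin
        obtain ⟨k', hk', h'⟩ := hmin
        exact ih k' hk' n h'
  refine ⟨fun k => g (k - i), by simp [g], ?_, ?_⟩
  · intro k hk
    obtain ⟨d, rfl⟩ := Nat.exists_eq_add_of_le hk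
    have := (hnext _ _ (hg d)).2.1
    simp only [show i + d + 1 - i = d + 1 by omega, show i + d - i = d by omega]
    exact this
  · intro m
    obtain ⟨k, hk⟩ := hD _ _ (hg m)
    obtain ⟨n', h1, h2⟩ := hB k m hk
    exact ⟨i + n', by omega, by simpa using h2⟩

theorem level_claim [Finite Q] (x : ℕ → A) (j : ℕ) :
    (∀ i, level Δ B x j i ⊆ Acc' Δ B x i) ∨
    ∃ m, ∀ i, m ≤ i → (level Δ B x j i).ncard + j ≤ Nat.card Q := by
  induction j with
  | zero =>
    right
    exact ⟨0, fun i _ => by simp [level, Set.ncard_univ]⟩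
  | succ j ih =>
    have hsub : ∀ i, level Δ B x (j+1) i ⊆ infPart Δ x (level Δ B x j) i :=
      fun i => reachPart_sub Δ B x _ i
    have hsub2 := fun i => infPart_sub Δ x (level Δ B x j) i
    rcases ih with h | ⟨m, hm⟩
    · exact Or.inl fun i => ((hsub i).trans (hsub2 i)).trans (h i)
    · by_cases hfull : ∀ i, infPart Δ x (level Δ B x j) i ⊆ level Δ B x (j+1) i
      · left
        intro i
        exact (hsub i).trans (full_acc Δ B x _ (fun i q hq => infPart_succ Δ x _ i q hq) hfull i)
      · right
        push Not at hfull
        obtain ⟨i0, hi0⟩ := hfull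
        obtain ⟨q, hq, hq'⟩ := Set.not_subset.mp hi0
        have key : ∀ d, ∃ q, q ∈ infPart Δ x (level Δ B x j) (i0 + d) ∧
            q ∉ level Δ B x (j+1) (i0 + d) := by
          intro d
          induction d with
          | zero => exact ⟨q, hq, hq'⟩
          | succ d ih =>
            obtain ⟨p, hp, hp'⟩ := ih
            obtain ⟨p', h1, h2⟩ := infPart_succ Δ x _ _ p hp
            refine ⟨p', h1, fun h => hp' ?_⟩
            exact approx_pre (stepB Δ B) (stepB_mono Δ B)
              (fun k => (x k, infPart Δ x (level Δ B x j) k)) (i0 + d)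
              ⟨hp, Or.inr ⟨p', h2, h⟩⟩
        refine ⟨max m i0, fun i hi => ?_⟩
        obtain ⟨d, rfl⟩ := Nat.exists_eq_add_of_le (le_trans (le_max_right _ _) hi)
        obtain ⟨p, hp, hp'⟩ := key d
        have h1 := hm _ (le_trans (le_max_left _ _) hi)
        have h2 := Set.ncard_lt_ncard
          (Set.ssubset_iff_subset_ne.mpr ⟨hsub (i0+d), fun h => hp' (h ▸ hp)⟩) (Set.toFinite _)
        have h3 := Set.ncard_le_ncard (hsub2 (i0+d)) (Set.toFinite _)
        omega

theorem level_eq [Finite Q] (x : ℕ → A) (i : ℕ) :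
    level Δ B x (Nat.card Q + 1) i = Acc' Δ B x i := by
  apply Set.Subset.antisymm _ (acc_level Δ B x _ i)
  rcases level_claim Δ B x (Nat.card Q + 1) with h | ⟨m, hm⟩
  · exact h i
  · have := hm m le_rfl
    omega

end nba

/-- completeness, Carton–Michel: every ω-language recognized by a
nondeterministic Büchi automaton is recognized by a backward deterministic automaton with
a state-based Büchi recurrence condition, augmented with a suitable set of initial
states. -/
theorem buechi_language_backward_deterministic {Q A : Type*} [Fintype Q]
    (Δ : Set (Q × A × Q)) (B : Set Q) (I : Set Q) :
    ∃ (P : Type) (_ : Fintype P) (ρ : A → P → P) (Ω : Set P) (I' : Set P),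
      (∀ u : ℕ → A, ∃! r : ℕ → P, IsBackRun ρ u r ∧ SBFinal Ω r) ∧
      (∀ (u : ℕ → A) (r : ℕ → P), IsBackRun ρ u r → SBFinal Ω r →
        (r 0 ∈ I' ↔ ∃ q ∈ I, NBAAccepts Δ B u q)) := by
  classical
  obtain ⟨P, hP, ρ, E, out, h1, h2, h3⟩ := brec_level Δ B (Nat.card Q + 1)
  obtain ⟨N, ⟨e⟩⟩ := Finite.exists_equiv_fin (P × Prop)
  have hconv : ∀ (u : ℕ → A) (r : ℕ → Fin N),
      IsBackRun (fun a p => e (ρ a (e.symm p).1, E a (e.symm p).1)) u r →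
      SBFinal {p | (e.symm p).2} r →
      BFinal ρ E u (fun i => (e.symm (r i)).1) ∧
        ∀ i, r i = e ((e.symm (r i)).1, E (u i) (e.symm (r (i+1))).1) := by
    intro u r hr hf
    have ha : ∀ i, e.symm (r i) = (ρ (u i) (e.symm (r (i+1))).1, E (u i) (e.symm (r (i+1))).1) := by
      intro i
      conv_lhs => rw [hr i]
      simp
    refine ⟨⟨fun i => congrArg Prod.fst (ha i), fun m => ?_⟩, fun i => ?_⟩
    · obtain ⟨i, hi, h⟩ := hf m
      refine ⟨i, hi, ?_⟩
      have h' : (e.symm (r i)).2 := h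
      rw [ha i] at h'
      exact h'
    · rw [← e.symm_apply_eq, ha i]
  refine ⟨Fin N, inferInstance, fun a p => e (ρ a (e.symm p).1, E a (e.symm p).1),
    {p | (e.symm p).2}, {p | ∃ q ∈ I, q ∈ out (e.symm p).1}, ?_, ?_⟩
  · intro u
    obtain ⟨r, hr⟩ := h1 u
    refine ⟨fun i => e (r i, E (u i) (r (i+1))), ⟨fun i => ?_, fun m => ?_⟩, ?_⟩
    · simp only [Equiv.symm_apply_apply]
      rw [← hr.1 i]
    · obtain ⟨i, hi, h⟩ := hr.2 m
      exact ⟨i, hi, by simpa using h⟩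
    · rintro r' ⟨hr1, hr2⟩
      obtain ⟨ha, hb⟩ := hconv u r' hr1 hr2
      have hc := h2 u _ _ ha hr
      funext i
      rw [hb i]
      have h0 := congrFun hc i
      have h1 := congrFun hc (i+1)
      rw [h0, h1]
  · intro u r hr1 hr2
    obtain ⟨ha, hb⟩ := hconv u r hr1 hr2
    have ho := h3 u _ ha 0
    simp only [level_eq] at ho
    simp only [Set.mem_ofPred_eq, ho]
    simp [Acc', NBAAccepts]
end
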